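/- Let ρ^{ABCD} be a state of a quadripartite quantum system on finite-dimensional Hilbert spaces such that strong subadditivity is saturated for the three triples ABC, CAB and ADB (pivot always in the middle), i.e. I(A;C|B) = 0, I(C;B|A) = 0 and I(A;B|D) = 0. Then I(C;D) ≥ I(C;AB). -/

import Mathlib

open scoped BigOperators ComplexOrder

/-- Von Neumann entropy (base 2) of a matrix: for a Hermitian matrix, the Shannon
entropy of its eigenvalues; junk value `0` for non-Hermitian matrices. -/
noncomputable def vNEntropy {n : Type*} [Fintype n] [DecidableEq n] (M : Matrix n n ℂ) : ℝ :=
  if h : M.IsHermitian then -∑ i, (h.eigenvalues i) * Real.logb 2 (h.eigenvalues i) else 0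

/-- A density matrix: positive semidefinite with trace one. -/
def IsState {n : Type*} [Fintype n] [DecidableEq n] (M : Matrix n n ℂ) : Prop :=
  M.PosSemidef ∧ M.trace = 1

section Quad

variable {A B C D : Type*} [Fintype A] [DecidableEq A] [Fintype B] [DecidableEq B]
  [Fintype C] [DecidableEq C] [Fintype D] [DecidableEq D]
  (ρ : Matrix (A × B × C × D) (A × B × C × D) ℂ)

/-- Entropies of the 15 marginals of a quadripartite state. -/
noncomputable def SA : ℝ :=
  vNEntropy (Matrix.of fun a a' : A => ∑ b, ∑ c, ∑ d, ρ (a, b, c, d) (a', b, c, d))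
noncomputable def SB : ℝ :=
  vNEntropy (Matrix.of fun b b' : B => ∑ a, ∑ c, ∑ d, ρ (a, b, c, d) (a, b', c, d))
noncomputable def SC : ℝ :=
  vNEntropy (Matrix.of fun c c' : C => ∑ a, ∑ b, ∑ d, ρ (a, b, c, d) (a, b, c', d))
noncomputable def SD : ℝ :=
  vNEntropy (Matrix.of fun d d' : D => ∑ a, ∑ b, ∑ c, ρ (a, b, c, d) (a, b, c, d'))
noncomputable def SAB : ℝ :=
  vNEntropy (Matrix.of fun p q : A × B => ∑ c, ∑ d, ρ (p.1, p.2, c, d) (q.1, q.2, c, d))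
noncomputable def SAC : ℝ :=
  vNEntropy (Matrix.of fun p q : A × C => ∑ b, ∑ d, ρ (p.1, b, p.2, d) (q.1, b, q.2, d))
noncomputable def SAD : ℝ :=
  vNEntropy (Matrix.of fun p q : A × D => ∑ b, ∑ c, ρ (p.1, b, c, p.2) (q.1, b, c, q.2))
noncomputable def SBC : ℝ :=
  vNEntropy (Matrix.of fun p q : B × C => ∑ a, ∑ d, ρ (a, p.1, p.2, d) (a, q.1, q.2, d))
noncomputable def SBD : ℝ :=
  vNEntropy (Matrix.of fun p q : B × D => ∑ a, ∑ c, ρ (a, p.1, c, p.2) (a, q.1, c, q.2))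
noncomputable def SCD : ℝ :=
  vNEntropy (Matrix.of fun p q : C × D => ∑ a, ∑ b, ρ (a, b, p.1, p.2) (a, b, q.1, q.2))
noncomputable def SABC : ℝ :=
  vNEntropy (Matrix.of fun p q : A × B × C =>
    ∑ d, ρ (p.1, p.2.1, p.2.2, d) (q.1, q.2.1, q.2.2, d))
noncomputable def SABD : ℝ :=
  vNEntropy (Matrix.of fun p q : A × B × D =>
    ∑ c, ρ (p.1, p.2.1, c, p.2.2) (q.1, q.2.1, c, q.2.2))
noncomputable def SACD : ℝ :=
  vNEntropy (Matrix.of fun p q : A × C × D =>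
    ∑ b, ρ (p.1, b, p.2.1, p.2.2) (q.1, b, q.2.1, q.2.2))
noncomputable def SBCD : ℝ :=
  vNEntropy (Matrix.of fun p q : B × C × D =>
    ∑ a, ρ (a, p.1, p.2.1, p.2.2) (a, q.1, q.2.1, q.2.2))
noncomputable def SABCD : ℝ := vNEntropy ρ

end Quad

/-!
Erasing a party, `M ↦ (1 / |X|) ⊗ tr_X M`, is a trace-preserving conditional expectation `E`, and
`I(X;Z|Y) = 0` says that the relative entropy of `ρ^{XYZ}` with respect to `ρ^{XY} ⊗ 1` does not
decrease when `X` is erased. Relative entropy is an integral over `t > 0` of expectations of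
resolvents of the relative modular operator, each of which is monotone, so in the saturated case
all the resolvents agree. Functional calculus then gives Petz's recovery identity
`R ^ s = σ ^ s * E σ ^ (-s) * E R ^ s` for every real `s`, powers being taken on supports.

Let `K = (ρ^A) ^ (-1/2) * ρ^{AC} * (ρ^A) ^ (-1/2)`, and `K'` likewise with `B` in place of `A`.
The first two saturations give `K * ρ^{AB} = K' * ρ^{AB} = ρ^{ABC}`. By the third, `ρ^{ABD}` is
recovered from `ρ^{BD}` by an operator on `AD`, which commutes with `K'`; hence `K` is intertwined
by `(ρ^{AD}) ^ (1/2)` with a Hermitian operator `L` on `CD`, and `L` may replace `K` in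
`S(AB) - S(ABC) = tr (ρ log K)`. Finally Klein's inequality for `ρ^{CD}` and `L * ρ^D` bounds
`tr (ρ^{CD} log L)` by `S(D) - S(CD)`.
-/

namespace LindenWinter

open Matrix Polynomial
open scoped MatrixOrder

section PosSemidef

variable {n : Type*} [Fintype n] {X Y : Matrix n n ℂ}

open scoped Matrix.Norms.L2Operator in
theorem exists_eq_conjTranspose_mul_self (hX : X.PosSemidef) : ∃ Z : Matrix n n ℂ, X = Zᴴ * Z := by
  classical exact CStarAlgebra.nonneg_iff_eq_star_mul_self.1 hX.nonneg

theorem re_trace_mul_nonneg (hX : X.PosSemidef) (hY : Y.PosSemidef) :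
    0 ≤ (X * Y).trace.re := by
  obtain ⟨Z, rfl⟩ := exists_eq_conjTranspose_mul_self hX
  rw [mul_assoc, trace_mul_comm]
  exact (Complex.nonneg_iff.1 (hY.mul_mul_conjTranspose_same Z).trace_nonneg).1

theorem mul_eq_zero_of_re_trace_eq_zero (hX : X.PosSemidef)
    (h : (Y * X * Yᴴ).trace.re = 0) : Y * X = 0 := by
  have htr : (Y * X * Yᴴ).trace = 0 :=
    Complex.ext h (Complex.nonneg_iff.1 (hX.mul_mul_conjTranspose_same Y).trace_nonneg).2.symm
  obtain ⟨Z, rfl⟩ := exists_eq_conjTranspose_mul_self hX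
  have hYZ : Y * (Zᴴ * Z) * Yᴴ = (Y * Zᴴ) * (Y * Zᴴ)ᴴ := by
    simp only [conjTranspose_mul, conjTranspose_conjTranspose, mul_assoc]
  rw [hYZ, trace_mul_conjTranspose_self_eq_zero_iff] at htr
  rw [← mul_assoc, htr, zero_mul]

end PosSemidef

section FunctionalCalculus

variable {n : Type*} [Fintype n] [DecidableEq n] {M X Y : Matrix n n ℂ}

theorem continuousOn_spectrum (f : ℝ → ℝ) (M : Matrix n n ℂ) :
    ContinuousOn f (spectrum ℝ M) :=
  M.finite_real_spectrum.continuousOn f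

theorem cfc_mul_cfc (f g : ℝ → ℝ) (M : Matrix n n ℂ) :
    cfc f M * cfc g M = cfc (fun x ↦ f x * g x) M :=
  (cfc_mul f g M (continuousOn_spectrum f M) (continuousOn_spectrum g M)).symm

theorem isHermitian_cfc (f : ℝ → ℝ) (M : Matrix n n ℂ) : (cfc f M).IsHermitian :=
  cfc_predicate f M

theorem posSemidef_cfc {f : ℝ → ℝ} (hf : ∀ x ∈ spectrum ℝ M, 0 ≤ f x) :
    (cfc f M).PosSemidef :=
  Matrix.nonneg_iff_posSemidef.1 (cfc_nonneg hf)

theorem spectrum_nonneg (hM : M.PosSemidef) {x : ℝ} (hx : x ∈ spectrum ℝ M) : 0 ≤ x :=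
  spectrum_nonneg_of_nonneg (Matrix.nonneg_iff_posSemidef.2 hM) hx

theorem exists_polynomial_eval_eq (f : ℝ → ℝ) {s : Set ℝ} (hs : s.Finite) :
    ∃ p : ℝ[X], ∀ x ∈ s, p.eval x = f x :=
  ⟨Lagrange.interpolate hs.toFinset id f, fun _ hx ↦
    Lagrange.eval_interpolate_at_node f Function.injective_id.injOn (hs.mem_toFinset.2 hx)⟩

theorem cfc_eq_aeval (hM : M.IsHermitian) {f : ℝ → ℝ} {p : ℝ[X]}
    (hp : ∀ x ∈ spectrum ℝ M, p.eval x = f x) : cfc f M = aeval M p := by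
  rw [← cfc_polynomial p M hM]
  exact cfc_congr fun x hx ↦ (hp x hx).symm

theorem semiconjBy_aeval (h : SemiconjBy X M Y) (p : ℝ[X]) :
    SemiconjBy X (aeval M p) (aeval Y p) := by
  induction p using Polynomial.induction_on' with
  | add p q hp hq => simpa only [map_add] using hp.add_right hq
  | monomial k a =>
    simp only [aeval_monomial]
    exact SemiconjBy.mul_right (Algebra.commutes a X).symm (h.pow_right k)

theorem semiconjBy_cfc (hM : M.IsHermitian) (hY : Y.IsHermitian) (h : SemiconjBy X M Y)
    (f : ℝ → ℝ) : SemiconjBy X (cfc f M) (cfc f Y) := by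
  obtain ⟨p, hp⟩ :=
    exists_polynomial_eval_eq f (M.finite_real_spectrum.union Y.finite_real_spectrum)
  rw [cfc_eq_aeval hM fun x hx ↦ hp x (.inl hx), cfc_eq_aeval hY fun x hx ↦ hp x (.inr hx)]
  exact semiconjBy_aeval h p

theorem cfc_mul_of_mul_eq_smul (hM : M.IsHermitian) {a : ℝ} (h : M * X = a • X)
    (f : ℝ → ℝ) : cfc f M * X = f a • X := by
  have hX : SemiconjBy X (algebraMap ℝ (Matrix n n ℂ) a) M := by
    rw [SemiconjBy, h, ← Algebra.commutes, Algebra.smul_def]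
  have ha : (algebraMap ℝ (Matrix n n ℂ) a).IsHermitian := IsSelfAdjoint.algebraMap _ (.all a)
  have hf := semiconjBy_cfc ha hM hX f
  rw [cfc_algebraMap, SemiconjBy, ← Algebra.commutes, ← Algebra.smul_def] at hf
  exact hf.symm

theorem cfc_mem_starSubalgebra {S : StarSubalgebra ℂ (Matrix n n ℂ)} (hM : M ∈ S)
    (f : ℝ → ℝ) : cfc f M ∈ S :=
  have : IsClosed (S : Set (Matrix n n ℂ)) :=
    Submodule.closed_of_finiteDimensional (Subalgebra.toSubmodule S.toSubalgebra)
  cfc_mem f hM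

/-- The finite set of eigenvalues of a matrix. -/
noncomputable def eigenvalueSet (M : Matrix n n ℂ) : Finset ℝ := M.finite_real_spectrum.toFinset

/-- The spectral projection of a Hermitian matrix onto the eigenspace of `a`; it is zero when `a`
is not an eigenvalue. -/
noncomputable def eigenproj (M : Matrix n n ℂ) (a : ℝ) : Matrix n n ℂ :=
  cfc (fun x ↦ if x = a then 1 else 0) M

theorem mem_eigenvalueSet {a : ℝ} : a ∈ eigenvalueSet M ↔ a ∈ spectrum ℝ M :=
  Set.Finite.mem_toFinset _

theorem cfc_mul_eigenproj (f : ℝ → ℝ) (M : Matrix n n ℂ) (a : ℝ) :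
    cfc f M * eigenproj M a = f a • eigenproj M a := by
  rw [eigenproj, cfc_mul_cfc, ← cfc_smul _ _ _ (continuousOn_spectrum _ M)]
  congr 1
  ext x
  by_cases hx : x = a <;> simp [hx]

theorem posSemidef_eigenproj (M : Matrix n n ℂ) (a : ℝ) : (eigenproj M a).PosSemidef :=
  posSemidef_cfc fun x _ ↦ by positivity

theorem isHermitian_eigenproj (M : Matrix n n ℂ) (a : ℝ) : (eigenproj M a).IsHermitian :=
  isHermitian_cfc _ M

theorem eigenproj_mem {S : StarSubalgebra ℂ (Matrix n n ℂ)} (hM : M ∈ S) (a : ℝ) :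
    eigenproj M a ∈ S :=
  cfc_mem_starSubalgebra hM _

theorem eigenproj_mul_self (M : Matrix n n ℂ) (a : ℝ) :
    eigenproj M a * eigenproj M a = eigenproj M a := by
  nth_rw 1 [eigenproj]
  rw [cfc_mul_eigenproj, if_pos rfl, one_smul]

theorem eigenproj_mul_cfc (f : ℝ → ℝ) (M : Matrix n n ℂ) (a : ℝ) :
    eigenproj M a * cfc f M = f a • eigenproj M a := by
  rw [← cfc_mul_eigenproj]
  exact cfc_commute_cfc _ _ M

theorem mul_eigenproj (hM : M.IsHermitian) (a : ℝ) : M * eigenproj M a = a • eigenproj M a := by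
  have h := cfc_mul_eigenproj (fun x ↦ x) M a
  rwa [cfc_id' ℝ M hM.isSelfAdjoint] at h

theorem eigenproj_mul (hM : M.IsHermitian) (a : ℝ) : eigenproj M a * M = a • eigenproj M a := by
  have h := eigenproj_mul_cfc (fun x ↦ x) M a
  rwa [cfc_id' ℝ M hM.isSelfAdjoint] at h

theorem cfc_eq_sum_eigenproj (f : ℝ → ℝ) (M : Matrix n n ℂ) :
    cfc f M = ∑ a ∈ eigenvalueSet M, f a • eigenproj M a := by
  simp only [eigenproj, ← cfc_smul _ _ M (continuousOn_spectrum _ M)]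
  rw [← cfc_sum _ M _ fun _ _ ↦ continuousOn_spectrum _ M]
  refine cfc_congr fun x hx ↦ ?_
  simp [Finset.sum_apply, mem_eigenvalueSet.2 hx]

theorem sum_eigenproj (hM : M.IsHermitian) : ∑ a ∈ eigenvalueSet M, eigenproj M a = 1 := by
  rw [← cfc_const_one ℝ M hM.isSelfAdjoint, cfc_eq_sum_eigenproj]
  simp only [one_smul]

end FunctionalCalculus

section SupportPowers

variable {n : Type*} [Fintype n] [DecidableEq n] {M R σ : Matrix n n ℂ}

/-- The real power `M ^ s` of a positive semidefinite matrix, computed on its support and extended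
by zero to its kernel: `suppPow M 0` is the support projection and `suppPow M (-1)` the
Moore–Penrose inverse. -/
noncomputable def suppPow (M : Matrix n n ℂ) (s : ℝ) : Matrix n n ℂ :=
  cfc (fun x : ℝ ↦ if x = 0 then 0 else x ^ s) M

notation:75 M:75 "^ₛ" s:76 => suppPow M s

theorem isHermitian_suppPow (M : Matrix n n ℂ) (s : ℝ) : (M ^ₛ s).IsHermitian :=
  isHermitian_cfc _ M

theorem suppPow_mem {S : StarSubalgebra ℂ (Matrix n n ℂ)} (hM : M ∈ S) (s : ℝ) : M ^ₛ s ∈ S :=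
  cfc_mem_starSubalgebra hM _

theorem suppPow_one (hM : M.IsHermitian) : M ^ₛ 1 = M := by
  refine (cfc_congr fun x _ ↦ ?_).trans (cfc_id' ℝ M hM.isSelfAdjoint)
  by_cases hx : x = 0 <;> simp [hx]

theorem suppPow_mul_suppPow (hM : M.PosSemidef) (s t : ℝ) : M ^ₛ s * M ^ₛ t = M ^ₛ (s + t) := by
  rw [suppPow, suppPow, suppPow, cfc_mul_cfc]
  refine cfc_congr fun x hx ↦ ?_
  have hx0 := spectrum_nonneg hM hx
  by_cases hx' : x = 0
  · simp [hx']
  · simp [hx', Real.rpow_add (hx0.lt_of_ne' hx')]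

theorem suppPow_mul_self (hM : M.PosSemidef) (s : ℝ) : M ^ₛ s * M = M ^ₛ (s + 1) := by
  rw [← suppPow_mul_suppPow hM, suppPow_one hM.isHermitian]

theorem self_mul_suppPow (hM : M.PosSemidef) (s : ℝ) : M * M ^ₛ s = M ^ₛ (1 + s) := by
  rw [← suppPow_mul_suppPow hM, suppPow_one hM.isHermitian]

theorem suppPow_half_mul_suppPow_half (hM : M.PosSemidef) : M ^ₛ (1 / 2) * M ^ₛ (1 / 2) = M := by
  rw [suppPow_mul_suppPow hM, add_halves, suppPow_one hM.isHermitian]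

theorem suppPow_zero_eq (hM : M.IsHermitian) : M ^ₛ 0 = 1 - eigenproj M 0 := by
  rw [suppPow, eigenproj, ← cfc_const_one ℝ M hM.isSelfAdjoint,
    ← cfc_sub _ _ M (continuousOn_spectrum _ M) (continuousOn_spectrum _ M)]
  refine cfc_congr fun x _ ↦ ?_
  by_cases hx : x = 0 <;> simp [hx]

/-- The support of the Hermitian matrix `R` is contained in that of `σ`. -/
def SupportedOn (R σ : Matrix n n ℂ) : Prop := R * σ ^ₛ 0 = R

theorem SupportedOn.mul_eigenproj_zero (h : SupportedOn R σ) : R * eigenproj σ 0 = 0 := by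
  rw [← h, mul_assoc, suppPow, cfc_mul_eigenproj]
  simp

theorem SupportedOn.suppPow_mul (h : SupportedOn R σ) (hR : R.PosSemidef) (s : ℝ) :
    R ^ₛ s * σ ^ₛ 0 = R ^ₛ s := by
  rw [← sub_add_cancel s 1, ← suppPow_mul_self hR, mul_assoc, h]

theorem SupportedOn.mul_suppPow (h : SupportedOn R σ) (hR : R.PosSemidef) (s : ℝ) :
    σ ^ₛ 0 * R ^ₛ s = R ^ₛ s := by
  have := congrArg conjTranspose (h.suppPow_mul hR s)
  rwa [conjTranspose_mul, (isHermitian_suppPow _ _).eq, (isHermitian_suppPow _ _).eq] at this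

end SupportPowers

section Overlap

variable {n : Type*} [Fintype n] [DecidableEq n] {K M R σ Z : Matrix n n ℂ}

/-- The overlap `Tr (P_a Q_b)` of two spectral projections, through which every trace of the form
`Tr (f(σ) g(R))` is expressed. -/
noncomputable def overlap (σ R : Matrix n n ℂ) (a b : ℝ) : ℝ :=
  (eigenproj σ a * eigenproj R b).trace.re

theorem overlap_nonneg (σ R : Matrix n n ℂ) (a b : ℝ) : 0 ≤ overlap σ R a b :=
  re_trace_mul_nonneg (posSemidef_eigenproj σ a) (posSemidef_eigenproj R b)

theorem re_trace_cfc_mul_cfc (f g : ℝ → ℝ) (σ R : Matrix n n ℂ) :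
    (cfc f σ * cfc g R).trace.re =
      ∑ a ∈ eigenvalueSet σ, ∑ b ∈ eigenvalueSet R, f a * g b * overlap σ R a b := by
  rw [cfc_eq_sum_eigenproj f σ, cfc_eq_sum_eigenproj g R]
  simp only [overlap, Finset.sum_mul_sum, smul_mul_smul_comm, trace_sum, trace_smul,
    Complex.re_sum, Complex.smul_re, smul_eq_mul]

theorem overlap_zero_left (hR : R.IsHermitian) (h : SupportedOn R σ) {b : ℝ} (hb : b ≠ 0) :
    overlap σ R 0 b = 0 := by
  have hzero : b • (eigenproj R b * eigenproj σ 0) = 0 := by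
    rw [← smul_mul_assoc, ← eigenproj_mul hR, mul_assoc, h.mul_eigenproj_zero, mul_zero]
  rw [overlap, trace_mul_comm, (smul_eq_zero.1 hzero).resolve_left hb, trace_zero, Complex.zero_re]

theorem mul_log_sub_log_le {x y : ℝ} (hx : 0 < x) (hy : 0 < y) :
    x * (Real.log y - Real.log x) ≤ y - x := by
  rw [← Real.log_div hy.ne' hx.ne']
  calc x * Real.log (y / x) ≤ x * (y / x - 1) := by
        gcongr
        exact Real.log_le_sub_one_of_pos (div_pos hy hx)
    _ = y - x := by field_simp

/-- **Klein's inequality**, for matrices of equal trace. -/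
theorem re_trace_mul_log_le (hR : R.PosSemidef) (hσ : σ.PosSemidef) (htr : R.trace = σ.trace)
    (h : SupportedOn R σ) :
    (R * cfc Real.log σ).trace.re ≤ (R * cfc Real.log R).trace.re := by
  have trace_R := re_trace_cfc_mul_cfc (fun _ ↦ 1) (fun x ↦ x) σ R
  have trace_σ := re_trace_cfc_mul_cfc (fun x ↦ x) (fun _ ↦ 1) σ R
  have trace_log_σ := re_trace_cfc_mul_cfc Real.log (fun x ↦ x) σ R
  have trace_log_R := re_trace_cfc_mul_cfc (fun _ ↦ 1) (fun x ↦ x * Real.log x) σ R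
  rw [← cfc_mul_cfc] at trace_log_R
  rw [cfc_const_one ℝ σ hσ.isHermitian.isSelfAdjoint,
    cfc_id' ℝ R hR.isHermitian.isSelfAdjoint, one_mul] at trace_R trace_log_R
  rw [cfc_const_one ℝ R hR.isHermitian.isSelfAdjoint,
    cfc_id' ℝ σ hσ.isHermitian.isSelfAdjoint, mul_one] at trace_σ
  rw [cfc_id' ℝ R hR.isHermitian.isSelfAdjoint, trace_mul_comm] at trace_log_σ
  have pointwise : ∀ a ∈ eigenvalueSet σ, ∀ b ∈ eigenvalueSet R,
      b * (Real.log a - Real.log b) * overlap σ R a b ≤ (a - b) * overlap σ R a b := by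
    intro a ha b hb
    have ha0 := spectrum_nonneg hσ (mem_eigenvalueSet.1 ha)
    have hb0 := spectrum_nonneg hR (mem_eigenvalueSet.1 hb)
    have hw := overlap_nonneg σ R a b
    rcases hb0.eq_or_lt with rfl | hb0
    · simpa using mul_nonneg ha0 hw
    rcases ha0.eq_or_lt with rfl | ha0
    · simp [overlap_zero_left hR.isHermitian h hb0.ne']
    · exact mul_le_mul_of_nonneg_right (mul_log_sub_log_le hb0 ha0) hw
  have summed := Finset.sum_le_sum fun a ha ↦ Finset.sum_le_sum (pointwise a ha)
  have htr' := congrArg Complex.re htr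
  rw [trace_R, trace_σ] at htr'
  rw [trace_log_σ, trace_log_R]
  simp only [mul_sub, sub_mul, Finset.sum_sub_distrib, one_mul, mul_one] at summed htr' ⊢
  simp only [mul_comm (Real.log _)]
  linarith

theorem cfc_mul_mul_of_mul_eq_smul {f g h : ℝ → ℝ} {a b : ℝ} (hab : h (a * b) = f a + g b)
    (hK : K.IsHermitian) (hM : M.IsHermitian) (hKM : (K * M).IsHermitian) (hKZ : K * Z = a • Z)
    (hMZ : M * Z = b • Z) : cfc h (K * M) * Z = (cfc f K + cfc g M) * Z := by
  have hKMZ : K * M * Z = (a * b) • Z := by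
    rw [mul_assoc, hMZ, mul_smul_comm, hKZ, smul_smul, mul_comm b]
  rw [cfc_mul_of_mul_eq_smul hKM hKMZ, add_mul, cfc_mul_of_mul_eq_smul hK hKZ,
    cfc_mul_of_mul_eq_smul hM hMZ, hab, add_smul]

theorem eigenproj_zero_mul_of_suppPow_zero_mul (h : K ^ₛ 0 * Z = Z) : eigenproj K 0 * Z = 0 := by
  rw [← h, ← mul_assoc, suppPow, eigenproj_mul_cfc, if_pos rfl, zero_smul, zero_mul]

theorem cfc_mul_mul {f g h : ℝ → ℝ} (hfgh : ∀ a ≠ 0, ∀ b ≠ 0, h (a * b) = f a + g b)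
    (hK : K.IsHermitian) (hM : M.IsHermitian) (hKM : Commute K M)
    (hZK : K ^ₛ 0 * Z = Z) (hZM : M ^ₛ 0 * Z = Z) :
    cfc h (K * M) * Z = (cfc f K + cfc g M) * Z := by
  have herm : (K * M).IsHermitian := by
    rw [IsHermitian, conjTranspose_mul, hK.eq, hM.eq, hKM.eq]
  have hKproj (b : ℝ) : Commute K (eigenproj M b) := (hKM.symm.cfc_real _).symm
  have hproj (a b : ℝ) : Commute (eigenproj K a) (eigenproj M b) := (hKproj b).cfc_real _
  have joint (a b : ℝ) : cfc h (K * M) * (eigenproj K a * (eigenproj M b * Z)) =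
      (cfc f K + cfc g M) * (eigenproj K a * (eigenproj M b * Z)) := by
    by_cases hb : b = 0
    · rw [hb, eigenproj_zero_mul_of_suppPow_zero_mul hZM, mul_zero, mul_zero, mul_zero]
    by_cases ha : a = 0
    · rw [ha, (hproj 0 b).left_comm, eigenproj_zero_mul_of_suppPow_zero_mul hZK, mul_zero,
        mul_zero, mul_zero]
    refine cfc_mul_mul_of_mul_eq_smul (hfgh a ha b hb) hK hM herm ?_ ?_
    · rw [← mul_assoc, mul_eigenproj hK, smul_mul_assoc]
    · rw [(hproj a b).left_comm, ← mul_assoc, mul_eigenproj hM, smul_mul_assoc]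
  have resolution : Z = ∑ a ∈ eigenvalueSet K, ∑ b ∈ eigenvalueSet M,
      eigenproj K a * (eigenproj M b * Z) := by
    simp only [← Finset.mul_sum, ← Finset.sum_mul, sum_eigenproj hK, sum_eigenproj hM, one_mul]
  rw [resolution]
  simp only [Finset.mul_sum, joint]

-- The hypotheses on `Z` avoid the junk value `Real.log 0 = 0`, for which
-- `log (x * y) = log x + log y` fails.
theorem cfc_log_mul (hK : K.IsHermitian) (hM : M.IsHermitian) (hKM : Commute K M)
    (hZK : K ^ₛ 0 * Z = Z) (hZM : M ^ₛ 0 * Z = Z) :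
    cfc Real.log (K * M) * Z = (cfc Real.log K + cfc Real.log M) * Z :=
  cfc_mul_mul (fun _ ha _ hb ↦ Real.log_mul ha hb) hK hM hKM hZK hZM

theorem suppPow_zero_mul_mul (hK : K.IsHermitian) (hM : M.IsHermitian) (hKM : Commute K M)
    (hZK : K ^ₛ 0 * Z = Z) (hZM : M ^ₛ 0 * Z = Z) : (K * M) ^ₛ 0 * Z = Z := by
  have h := cfc_mul_mul (f := fun x ↦ if x = 0 then 0 else x ^ (0 : ℝ)) (g := fun _ ↦ 0)
    (h := fun x ↦ if x = 0 then 0 else x ^ (0 : ℝ)) (fun a ha b hb ↦ by simp [ha, hb])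
    hK hM hKM hZK hZM
  rwa [cfc_const_zero, add_zero, ← suppPow, ← suppPow, hZK] at h

end Overlap

/-- A trace-preserving conditional expectation of the matrix algebra onto a star subalgebra, given
by the property that characterises it: `toFun y` is the element of `range` with the same pairings
with `range` as `y`. -/
structure CondExp (n : Type*) [Fintype n] [DecidableEq n] where
  toFun : Matrix n n ℂ → Matrix n n ℂ
  range : StarSubalgebra ℂ (Matrix n n ℂ)
  map_mem' : ∀ y, toFun y ∈ range
  trace_mul_map' : ∀ x ∈ range, ∀ y, (x * toFun y).trace = (x * y).trace

namespace CondExp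

variable {n : Type*} [Fintype n] [DecidableEq n] (E : CondExp n) {x y z : Matrix n n ℂ}

instance : CoeFun (CondExp n) fun _ ↦ Matrix n n ℂ → Matrix n n ℂ := ⟨toFun⟩

theorem map_mem (y : Matrix n n ℂ) : E y ∈ E.range := E.map_mem' y

variable {E}

theorem trace_mul_map (hx : x ∈ E.range) (y : Matrix n n ℂ) :
    (x * E y).trace = (x * y).trace :=
  E.trace_mul_map' x hx y

theorem map_eq_of_trace_mul (hz : z ∈ E.range)
    (h : ∀ x ∈ E.range, (x * z).trace = (x * y).trace) : E y = z := by
  have hd : (E y - z)ᴴ ∈ E.range := star_mem (sub_mem (E.map_mem y) hz)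
  have norm_zero : ((E y - z)ᴴ * (E y - z)).trace = 0 := by
    rw [mul_sub, trace_sub, h _ hd, trace_mul_map hd, sub_self]
  exact sub_eq_zero.1 (trace_conjTranspose_mul_self_eq_zero_iff.1 norm_zero)

theorem map_of_mem (hx : x ∈ E.range) : E x = x := map_eq_of_trace_mul hx fun _ _ ↦ rfl

theorem map_mul_left (hx : x ∈ E.range) (y : Matrix n n ℂ) : E (x * y) = x * E y :=
  map_eq_of_trace_mul (mul_mem hx (E.map_mem y)) fun w hw ↦ by
    rw [← mul_assoc, trace_mul_map (mul_mem hw hx), mul_assoc]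

theorem map_mul_right (hx : x ∈ E.range) (y : Matrix n n ℂ) : E (y * x) = E y * x :=
  map_eq_of_trace_mul (mul_mem (E.map_mem y) hx) fun w hw ↦ by
    rw [← mul_assoc, trace_mul_comm, ← mul_assoc, trace_mul_map (mul_mem hx hw), mul_assoc,
      trace_mul_comm, mul_assoc]

theorem map_conjTranspose (y : Matrix n n ℂ) : E yᴴ = (E y)ᴴ :=
  map_eq_of_trace_mul (star_mem (E.map_mem y)) fun w hw ↦ by
    have h := congrArg star (trace_mul_map (star_mem hw) y)
    rw [star_eq_conjTranspose w, ← trace_conjTranspose, ← trace_conjTranspose, conjTranspose_mul,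
      conjTranspose_mul, conjTranspose_conjTranspose] at h
    rw [trace_mul_comm, h, trace_mul_comm]

theorem isHermitian_map (hy : y.IsHermitian) : (E y).IsHermitian := by
  rw [IsHermitian, ← map_conjTranspose, hy.eq]

theorem trace_map (y : Matrix n n ℂ) : (E y).trace = y.trace := by
  simpa only [one_mul] using trace_mul_map (one_mem E.range) y

theorem posSemidef_map (hy : y.PosSemidef) : (E y).PosSemidef := by
  have hE := isHermitian_map (E := E) hy.isHermitian
  have hneg : ∀ a < 0, eigenproj (E y) a = 0 := by
    intro a ha
    have hP := posSemidef_eigenproj (E y) a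
    have htr := re_trace_mul_nonneg hP hy
    rw [← trace_mul_map (eigenproj_mem (E.map_mem y) a), eigenproj_mul hE, trace_smul,
      Complex.smul_re, smul_eq_mul] at htr
    have h0 := Complex.nonneg_iff.1 hP.trace_nonneg
    exact hP.trace_eq_zero_iff.1 (Complex.ext (by simp; nlinarith) h0.2.symm)
  rw [← cfc_id' ℝ (E y) hE.isSelfAdjoint, cfc_eq_sum_eigenproj]
  refine posSemidef_sum _ fun a _ ↦ ?_
  rcases lt_or_ge a 0 with ha0 | ha0
  · rw [hneg a ha0, smul_zero]
    exact .zero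
  · exact (posSemidef_eigenproj _ a).smul ha0

theorem supportedOn_map (hy : y.PosSemidef) : SupportedOn y (E y) := by
  have hE := isHermitian_map (E := E) hy.isHermitian
  set P := eigenproj (E y) 0
  have hPH : Pᴴ = P := isHermitian_eigenproj _ _
  have htr : (P * y * Pᴴ).trace.re = 0 := by
    rw [hPH, trace_mul_comm, ← mul_assoc, eigenproj_mul_self,
      ← trace_mul_map (eigenproj_mem (E.map_mem y) 0), eigenproj_mul hE, zero_smul, trace_zero,
      Complex.zero_re]
  have hPy := congrArg conjTranspose (mul_eq_zero_of_re_trace_eq_zero hy htr)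
  rw [conjTranspose_mul, hPH, hy.isHermitian.eq, conjTranspose_zero] at hPy
  rw [SupportedOn, suppPow_zero_eq hE, mul_sub, mul_one, hPy, sub_zero]

end CondExp

section Scalar

open Filter Topology

theorem exists_eq_sum_inv_add (f : ℝ → ℝ) {s : Finset ℝ} (hs : ∀ x ∈ s, 0 ≤ x) :
    ∃ c : ℝ → ℝ, ∀ x ∈ s, f x = ∑ y ∈ s, c y * (x + (y + 1))⁻¹ := by
  have hinj : Set.InjOn (fun y : ℝ ↦ -(y + 1)) s := fun y _ z _ h ↦ by simpa using h
  set Q := Lagrange.nodal s fun y : ℝ ↦ -(y + 1)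
  set p := Lagrange.interpolate s id fun x ↦ f x * Q.eval x
  have hp : p = Lagrange.interpolate s (fun y ↦ -(y + 1)) fun y ↦ p.eval (-(y + 1)) :=
    Lagrange.eq_interpolate hinj (Lagrange.degree_interpolate_lt _ Function.injective_id.injOn)
  refine ⟨fun y ↦ Lagrange.nodalWeight s (fun y ↦ -(y + 1)) y * p.eval (-(y + 1)), fun x hx ↦ ?_⟩
  have hnode : ∀ y ∈ s, x ≠ -(y + 1) := fun y hy ↦ by linarith [hs x hx, hs y hy]
  have hQ : Q.eval x ≠ 0 := Lagrange.eval_nodal_not_at_node hnode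
  have hpx : p.eval x = f x * Q.eval x :=
    Lagrange.eval_interpolate_at_node _ Function.injective_id.injOn hx
  rw [hp, Lagrange.eval_interpolate_not_at_node _ hnode, mul_comm (f x)] at hpx
  rw [← mul_left_cancel₀ hQ hpx]
  refine Finset.sum_congr rfl fun y _ ↦ ?_
  rw [sub_neg_eq_add, mul_right_comm]

theorem deriv_eq_zero_of_nonneg_of_tendsto {K K' : ℝ → ℝ}
    (hderiv : ∀ t, 0 ≤ t → HasDerivAt K (K' t) t) (hnonneg : ∀ t, 0 < t → 0 ≤ K' t)
    (hlim : Tendsto K atTop (𝓝 (K 0))) {t : ℝ} (ht : 0 < t) : K' t = 0 := by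
  have hmono : MonotoneOn K (Set.Ici 0) := by
    refine monotoneOn_of_deriv_nonneg (convex_Ici 0)
      (fun s hs ↦ (hderiv s hs).continuousAt.continuousWithinAt)
      (fun s hs ↦ (hderiv s (interior_subset hs)).differentiableAt.differentiableWithinAt) ?_
    intro s hs
    rw [interior_Ici] at hs
    rw [(hderiv s hs.le).deriv]
    exact hnonneg s hs
  have hconst : ∀ s, 0 ≤ s → K s = K 0 := fun s hs ↦
    le_antisymm
      (ge_of_tendsto hlim <| (eventually_ge_atTop s).mono fun r hr ↦ hmono hs (hs.trans hr) hr)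
      (hmono Set.self_mem_Ici hs hs)
  have hzero : HasDerivAt K 0 t :=
    (hasDerivAt_const t (K 0)).congr_of_eventuallyEq <|
      (eventually_gt_nhds ht).mono fun s hs ↦ hconst s hs.le
  exact (hderiv t ht.le).unique hzero

end Scalar

section DoubleSum

variable {n : Type*} [Fintype n] [DecidableEq n] {σ R : Matrix n n ℂ}

/-- The double operator sum `∑ k(a, b) P_a Q_b` over the spectral projections `P_a` of `σ` and
`Q_b` of `R`. -/
noncomputable def doubleCfc (k : ℝ → ℝ → ℝ) (σ R : Matrix n n ℂ) : Matrix n n ℂ :=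
  ∑ a ∈ eigenvalueSet σ, ∑ b ∈ eigenvalueSet R, k a b • (eigenproj σ a * eigenproj R b)

theorem doubleCfc_congr {k k' : ℝ → ℝ → ℝ}
    (h : ∀ a ∈ spectrum ℝ σ, ∀ b ∈ spectrum ℝ R, k a b = k' a b) :
    doubleCfc k σ R = doubleCfc k' σ R :=
  Finset.sum_congr rfl fun a ha ↦ Finset.sum_congr rfl fun b hb ↦ by
    rw [h a (mem_eigenvalueSet.1 ha) b (mem_eigenvalueSet.1 hb)]

theorem doubleCfc_mul (f g : ℝ → ℝ) (σ R : Matrix n n ℂ) :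
    doubleCfc (fun a b ↦ f a * g b) σ R = cfc f σ * cfc g R := by
  rw [cfc_eq_sum_eigenproj f σ, cfc_eq_sum_eigenproj g R, Finset.sum_mul_sum]
  simp only [doubleCfc, smul_mul_smul_comm]

theorem doubleCfc_snd (hσ : σ.IsHermitian) (hR : R.IsHermitian) :
    doubleCfc (fun _ b ↦ b) σ R = R := by
  simpa only [one_mul, cfc_const_one ℝ σ hσ.isSelfAdjoint, cfc_id' ℝ R hR.isSelfAdjoint]
    using doubleCfc_mul (fun _ ↦ 1) (fun b ↦ b) σ R

theorem mul_doubleCfc (hσ : σ.IsHermitian) (k : ℝ → ℝ → ℝ) (R : Matrix n n ℂ) :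
    σ * doubleCfc k σ R = doubleCfc (fun a b ↦ k a b * a) σ R := by
  simp only [doubleCfc, Finset.mul_sum, mul_smul_comm, ← mul_assoc, mul_eigenproj hσ,
    smul_mul_assoc, smul_smul]

theorem doubleCfc_mul_right (hR : R.IsHermitian) (k : ℝ → ℝ → ℝ) (σ : Matrix n n ℂ) :
    doubleCfc k σ R * R = doubleCfc (fun a b ↦ k a b * b) σ R := by
  simp only [doubleCfc, Finset.sum_mul, smul_mul_assoc, mul_assoc, eigenproj_mul hR,
    mul_smul_comm, smul_smul]

theorem doubleCfc_add (k k' : ℝ → ℝ → ℝ) (σ R : Matrix n n ℂ) :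
    doubleCfc (fun a b ↦ k a b + k' a b) σ R = doubleCfc k σ R + doubleCfc k' σ R := by
  simp only [doubleCfc, add_smul, Finset.sum_add_distrib]

theorem doubleCfc_const_mul (c : ℝ) (k : ℝ → ℝ → ℝ) (σ R : Matrix n n ℂ) :
    doubleCfc (fun a b ↦ c * k a b) σ R = c • doubleCfc k σ R := by
  simp only [doubleCfc, Finset.smul_sum, smul_smul]

theorem doubleCfc_sum {ι : Type*} (s : Finset ι) (k : ι → ℝ → ℝ → ℝ) (σ R : Matrix n n ℂ) :
    doubleCfc (fun a b ↦ ∑ i ∈ s, k i a b) σ R = ∑ i ∈ s, doubleCfc (k i) σ R := by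
  simp only [doubleCfc, Finset.sum_smul]
  exact (Finset.sum_congr rfl fun _ _ ↦ Finset.sum_comm).trans Finset.sum_comm

theorem doubleCfc_mem {S : StarSubalgebra ℂ (Matrix n n ℂ)} (hσ : σ ∈ S) (hR : R ∈ S)
    (k : ℝ → ℝ → ℝ) : doubleCfc k σ R ∈ S :=
  sum_mem fun a _ ↦ sum_mem fun b _ ↦ by
    rw [← Complex.coe_smul]
    exact SMulMemClass.smul_mem _ (mul_mem (eigenproj_mem hσ a) (eigenproj_mem hR b))

theorem re_trace_doubleCfc (k : ℝ → ℝ → ℝ) (σ R : Matrix n n ℂ) :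
    (doubleCfc k σ R).trace.re =
      ∑ a ∈ eigenvalueSet σ, ∑ b ∈ eigenvalueSet R, k a b * overlap σ R a b := by
  simp only [doubleCfc, trace_sum, Complex.re_sum, trace_smul, Complex.smul_re, smul_eq_mul,
    overlap]

/-- `f(Δ)` applied to the support projection of `R`, where `Δ X = σ X R⁻¹` is the relative modular
operator. -/
noncomputable def relModCfc (f : ℝ → ℝ) (σ R : Matrix n n ℂ) : Matrix n n ℂ :=
  doubleCfc (fun a b ↦ if b = 0 then 0 else f (a / b)) σ R

theorem relModCfc_rpow (hσ : σ.PosSemidef) (hR : R.PosSemidef) (s : ℝ) :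
    relModCfc (fun x ↦ if x = 0 then 0 else x ^ (-s)) σ R = σ ^ₛ (-s) * R ^ₛ s := by
  rw [relModCfc, suppPow, suppPow, ← doubleCfc_mul]
  refine doubleCfc_congr fun a ha b hb ↦ ?_
  by_cases ha0 : a = 0
  · simp [ha0]
  by_cases hb0 : b = 0
  · simp [hb0]
  · simp [ha0, hb0, Real.div_rpow (spectrum_nonneg hσ ha) (spectrum_nonneg hR hb),
      Real.rpow_neg (spectrum_nonneg hR hb)]

/-- The resolvent `(Δ + t)⁻¹` of the relative modular operator, applied to the support projection of
`R`. -/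
noncomputable def relResolvent (σ R : Matrix n n ℂ) (t : ℝ) : Matrix n n ℂ :=
  relModCfc (fun x ↦ (x + t)⁻¹) σ R

theorem relResolvent_mem {S : StarSubalgebra ℂ (Matrix n n ℂ)} (hσ : σ ∈ S) (hR : R ∈ S) (t : ℝ) :
    relResolvent σ R t ∈ S :=
  doubleCfc_mem hσ hR _

theorem mul_relResolvent_add (hσ : σ.PosSemidef) (hR : R.PosSemidef) {t : ℝ} (ht : 0 < t) :
    σ * relResolvent σ R t + t • (relResolvent σ R t * R) = R := by
  rw [relResolvent, relModCfc, mul_doubleCfc hσ.isHermitian, doubleCfc_mul_right hR.isHermitian,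
    ← doubleCfc_const_mul, ← doubleCfc_add]
  refine (doubleCfc_congr fun a ha b hb ↦ ?_).trans (doubleCfc_snd hσ.isHermitian hR.isHermitian)
  have ha0 := spectrum_nonneg hσ ha
  rcases (spectrum_nonneg hR hb).eq_or_lt with rfl | hb0
  · simp
  · have : a + t * b ≠ 0 := by positivity
    simp only [hb0.ne', if_false]
    field_simp

theorem relModCfc_congr {f g : ℝ → ℝ}
    (h : ∀ a ∈ spectrum ℝ σ, ∀ b ∈ spectrum ℝ R, f (a / b) = g (a / b)) :
    relModCfc f σ R = relModCfc g σ R :=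
  doubleCfc_congr fun a ha b hb ↦ by rw [h a ha b hb]

theorem relModCfc_sum {ι : Type*} (s : Finset ι) (c : ι → ℝ) (f : ι → ℝ → ℝ)
    (σ R : Matrix n n ℂ) :
    relModCfc (fun x ↦ ∑ i ∈ s, c i * f i x) σ R = ∑ i ∈ s, c i • relModCfc (f i) σ R := by
  simp only [relModCfc, ← doubleCfc_const_mul, ← doubleCfc_sum, mul_ite, mul_zero]
  congr! 4 with a b
  split_ifs <;> simp

end DoubleSum

section ResolventForm

variable {n : Type*} [Fintype n] {σ R Ξ : Matrix n n ℂ} {t : ℝ}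

/-- The quadratic form in `X` whose minimiser is the solution `Ξ` of `σ Ξ + t Ξ R = R`. -/
noncomputable def resolventForm (σ R : Matrix n n ℂ) (t : ℝ) (X : Matrix n n ℂ) : ℝ :=
  (Xᴴ * σ * X).trace.re + t * (X * R * Xᴴ).trace.re - 2 * (R * X).trace.re

theorem re_trace_conjTranspose (X : Matrix n n ℂ) : Xᴴ.trace.re = X.trace.re := by
  rw [trace_conjTranspose, Complex.star_def, Complex.conj_re]

theorem resolventForm_add_re_trace (hσ : σ.IsHermitian) (hR : R.IsHermitian)
    (hΞ : σ * Ξ + t • (Ξ * R) = R) (X : Matrix n n ℂ) :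
    resolventForm σ R t X + (Ξ * R).trace.re =
      ((X - Ξ)ᴴ * σ * (X - Ξ)).trace.re + t * ((X - Ξ) * R * (X - Ξ)ᴴ).trace.re := by
  have hΞ' : Ξᴴ * σ + t • (R * Ξᴴ) = R := by
    simpa [conjTranspose_mul, hσ.eq, hR.eq] using congrArg conjTranspose hΞ
  have polar (Y : Matrix n n ℂ) :
      (R * Y).trace.re = (Ξᴴ * σ * Y).trace.re + t * (Y * R * Ξᴴ).trace.re := by
    nth_rw 1 [← hΞ']
    rw [add_mul, trace_add, smul_mul_assoc, trace_smul, trace_mul_comm (R * Ξᴴ), Complex.add_re,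
      Complex.smul_re, smul_eq_mul, mul_assoc Y]
  have conj_σ : (Xᴴ * σ * Ξ).trace.re = (Ξᴴ * σ * X).trace.re := by
    rw [← re_trace_conjTranspose]
    simp only [conjTranspose_mul, conjTranspose_conjTranspose, hσ.eq, mul_assoc]
  have conj_R : (Ξ * R * Xᴴ).trace.re = (X * R * Ξᴴ).trace.re := by
    rw [← re_trace_conjTranspose]
    simp only [conjTranspose_mul, conjTranspose_conjTranspose, hR.eq, mul_assoc]
  rw [resolventForm, trace_mul_comm Ξ, polar Ξ, polar X]
  simp only [conjTranspose_sub, sub_mul, mul_sub, trace_sub, Complex.sub_re, conj_σ, conj_R]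
  ring

variable [DecidableEq n] {E : CondExp n}

theorem resolventForm_map {X : Matrix n n ℂ} (hX : X ∈ E.range) :
    resolventForm (E σ) (E R) t X = resolventForm σ R t X := by
  have hX' : Xᴴ ∈ E.range := star_mem hX
  have quadratic {Y Z : Matrix n n ℂ} (hYZ : Z * Y ∈ E.range) (M : Matrix n n ℂ) :
      (Y * E M * Z).trace = (Y * M * Z).trace := by
    rw [trace_mul_comm, ← mul_assoc, CondExp.trace_mul_map hYZ, mul_assoc, trace_mul_comm Z]
  rw [resolventForm, quadratic (mul_mem hX hX'), quadratic (mul_mem hX' hX),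
    trace_mul_comm (E R), CondExp.trace_mul_map hX, trace_mul_comm X, resolventForm]

end ResolventForm

section EqualityCase

open Filter Topology

variable {n : Type*} [Fintype n] [DecidableEq n] {E : CondExp n} {σ R : Matrix n n ℂ} {t : ℝ}

/-- The potential `t ↦ ∑ b log (a + t b) Tr (P_a Q_b)` over the spectral projections of `σ` and `R`.
It interpolates between `Tr (R log σ)` at `t = 0` and, up to a multiple of `log t`, `Tr (R log R)`
at infinity, and its derivative is a trace of the resolvent of the relative modular operator. -/
noncomputable def logPotential (σ R : Matrix n n ℂ) (t : ℝ) : ℝ :=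
  ∑ a ∈ eigenvalueSet σ, ∑ b ∈ eigenvalueSet R, b * Real.log (a + t * b) * overlap σ R a b

theorem logPotential_zero (hR : R.IsHermitian) (σ : Matrix n n ℂ) :
    logPotential σ R 0 = (R * cfc Real.log σ).trace.re := by
  have h := re_trace_cfc_mul_cfc Real.log (fun b ↦ b) σ R
  rw [cfc_id' ℝ R hR.isSelfAdjoint, trace_mul_comm] at h
  simp only [h, logPotential, zero_mul, add_zero, mul_comm (Real.log _)]

theorem hasDerivAt_mul_log_add_mul {a b : ℝ} (ha : 0 < a) (hb : 0 < b) (ht : 0 ≤ t) :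
    HasDerivAt (fun t ↦ b * Real.log (a + t * b)) ((a / b + t)⁻¹ * b) t := by
  have hlin : HasDerivAt (fun t ↦ a + t * b) b t := by
    simpa using ((hasDerivAt_id t).mul_const b).const_add a
  have hne : a + t * b ≠ 0 := by positivity
  rw [div_add' _ _ _ hb.ne', inv_div, mul_comm]
  exact (hlin.log hne).const_mul b

theorem tendsto_mul_log_add_mul_sub (a : ℝ) {b : ℝ} (hb : 0 < b) :
    Tendsto (fun t ↦ b * Real.log (a + t * b) - b * Real.log t) atTop (𝓝 (b * Real.log b)) := by
  have hlin : Tendsto (fun t : ℝ ↦ a / t + b) atTop (𝓝 b) := by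
    simpa using (tendsto_const_nhds.div_atTop tendsto_id).add_const b
  refine ((hlin.log hb.ne').const_mul b).congr' ?_
  filter_upwards [eventually_gt_atTop 0, hlin.eventually_ne hb.ne'] with t ht hne
  have factor : a + t * b = t * (a / t + b) := by field_simp
  rw [factor, Real.log_mul ht.ne' hne]
  ring

theorem eq_zero_or_overlap_eq_zero_or_pos (hσ : σ.PosSemidef) (hR : R.PosSemidef)
    (h : SupportedOn R σ) {a b : ℝ} (ha : a ∈ eigenvalueSet σ) (hb : b ∈ eigenvalueSet R) :
    b = 0 ∨ overlap σ R a b = 0 ∨ 0 < a ∧ 0 < b := by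
  rcases (spectrum_nonneg hR (mem_eigenvalueSet.1 hb)).eq_or_lt with rfl | hb0
  · exact .inl rfl
  rcases (spectrum_nonneg hσ (mem_eigenvalueSet.1 ha)).eq_or_lt with rfl | ha0
  · exact .inr (.inl (overlap_zero_left hR.isHermitian h hb0.ne'))
  · exact .inr (.inr ⟨ha0, hb0⟩)

theorem hasDerivAt_logPotential (hσ : σ.PosSemidef) (hR : R.PosSemidef) (h : SupportedOn R σ)
    (ht : 0 ≤ t) :
    HasDerivAt (logPotential σ R) (relResolvent σ R t * R).trace.re t := by
  rw [relResolvent, relModCfc, doubleCfc_mul_right hR.isHermitian, re_trace_doubleCfc]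
  refine HasDerivAt.fun_sum fun a ha ↦ HasDerivAt.fun_sum fun b hb ↦ ?_
  rcases eq_zero_or_overlap_eq_zero_or_pos hσ hR h ha hb with rfl | hab | ⟨ha0, hb0⟩
  · simpa using hasDerivAt_const t (0 : ℝ)
  · simpa [hab] using hasDerivAt_const t (0 : ℝ)
  · rw [if_neg hb0.ne']
    exact (hasDerivAt_mul_log_add_mul ha0 hb0 ht).mul_const _

theorem tendsto_logPotential (hσ : σ.PosSemidef) (hR : R.PosSemidef) (h : SupportedOn R σ) :
    Tendsto (fun t ↦ logPotential σ R t - R.trace.re * Real.log t) atTop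
      (𝓝 (R * cfc Real.log R).trace.re) := by
  have trace_R := re_trace_doubleCfc (fun _ b ↦ b) σ R
  rw [doubleCfc_snd hσ.isHermitian hR.isHermitian] at trace_R
  have trace_log := re_trace_cfc_mul_cfc (fun _ ↦ 1) (fun b ↦ b * Real.log b) σ R
  rw [cfc_const_one ℝ σ hσ.1.isSelfAdjoint, one_mul, ← cfc_mul_cfc,
    cfc_id' ℝ R hR.1.isSelfAdjoint] at trace_log
  simp only [trace_R, trace_log, logPotential, Finset.sum_mul, ← Finset.sum_sub_distrib]
  refine tendsto_finsetSum _ fun a ha ↦ tendsto_finsetSum _ fun b hb ↦ ?_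
  rcases eq_zero_or_overlap_eq_zero_or_pos hσ hR h ha hb with rfl | hab | ⟨-, hb0⟩
  · simp
  · simp [hab]
  · simpa only [one_mul, sub_mul, mul_right_comm] using
      (tendsto_mul_log_add_mul_sub a hb0).mul_const (overlap σ R a b)

theorem SupportedOn.map (h : SupportedOn R σ) (hσ : σ.PosSemidef) : SupportedOn (E R) (E σ) := by
  have hR : R * E σ ^ₛ 0 = R := by
    rw [← h, mul_assoc, (CondExp.supportedOn_map hσ).suppPow_mul hσ]
  rw [SupportedOn, ← CondExp.map_mul_right (suppPow_mem (E.map_mem σ) 0), hR]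

theorem re_trace_relResolvent_mul_sub (hσ : σ.PosSemidef) (hR : R.PosSemidef) (ht : 0 < t) :
    let X := relResolvent (E σ) (E R) t - relResolvent σ R t
    (relResolvent σ R t * R).trace.re
        - (relResolvent (E σ) (E R) t * E R).trace.re =
      (Xᴴ * σ * X).trace.re + t * (X * R * Xᴴ).trace.re := by
  intro X
  have hEσ := CondExp.posSemidef_map (E := E) hσ
  have hER := CondExp.posSemidef_map (E := E) hR
  have form := resolventForm_add_re_trace hσ.isHermitian hR.isHermitian
    (mul_relResolvent_add hσ hR ht) (relResolvent (E σ) (E R) t)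
  have form_map := resolventForm_add_re_trace hEσ.isHermitian hER.isHermitian
    (mul_relResolvent_add hEσ hER ht) (relResolvent (E σ) (E R) t)
  rw [resolventForm_map (relResolvent_mem (E.map_mem σ) (E.map_mem R) t), sub_self] at form_map
  simp only [mul_zero, zero_mul, trace_zero, Complex.zero_re, add_zero] at form_map
  linarith

/-- The relative entropy of `R` with respect to `σ` is the same before and after applying `E`. -/
def SaturatesMonotonicity (E : CondExp n) (R σ : Matrix n n ℂ) : Prop :=
  (R * cfc Real.log R).trace.re - (R * cfc Real.log σ).trace.re =
    (E R * cfc Real.log (E R)).trace.re - (E R * cfc Real.log (E σ)).trace.re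

theorem SaturatesMonotonicity.re_trace_relResolvent_mul_sub_eq_zero
    (hsat : SaturatesMonotonicity E R σ) (hσ : σ.PosSemidef) (hR : R.PosSemidef)
    (h : SupportedOn R σ) (ht : 0 < t) :
    (relResolvent σ R t * R).trace.re
      - (relResolvent (E σ) (E R) t * E R).trace.re = 0 := by
  have hEσ := CondExp.posSemidef_map (E := E) hσ
  have hER := CondExp.posSemidef_map (E := E) hR
  have hE : SupportedOn (E R) (E σ) := h.map hσ
  refine deriv_eq_zero_of_nonneg_of_tendsto
    (K := fun t ↦ logPotential σ R t - logPotential (E σ) (E R) t)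
    (fun t ht ↦ (hasDerivAt_logPotential hσ hR h ht).sub
      (hasDerivAt_logPotential hEσ hER hE ht)) (fun t ht ↦ ?_) ?_ ht
  · rw [re_trace_relResolvent_mul_sub hσ hR ht]
    have hσX := (hσ.conjTranspose_mul_mul_same (relResolvent (E σ) (E R) t
      - relResolvent σ R t)).trace_nonneg
    have hRX := (hR.mul_mul_conjTranspose_same (relResolvent (E σ) (E R) t
      - relResolvent σ R t)).trace_nonneg
    exact add_nonneg (Complex.nonneg_iff.1 hσX).1 (mul_nonneg ht.le (Complex.nonneg_iff.1 hRX).1)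
  · have lim := (tendsto_logPotential hσ hR h).sub (tendsto_logPotential hEσ hER hE)
    simp only [CondExp.trace_map, sub_sub_sub_cancel_right] at lim
    rw [SaturatesMonotonicity, ← logPotential_zero hR.isHermitian σ,
      ← logPotential_zero hER.isHermitian (E σ)] at hsat
    convert lim using 2
    linarith

theorem SaturatesMonotonicity.relResolvent_mul_eq (hsat : SaturatesMonotonicity E R σ)
    (hσ : σ.PosSemidef) (hR : R.PosSemidef) (h : SupportedOn R σ) (ht : 0 < t) :
    σ * relResolvent (E σ) (E R) t = σ * relResolvent σ R t ∧
      relResolvent (E σ) (E R) t * R = relResolvent σ R t * R := by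
  have gap := hsat.re_trace_relResolvent_mul_sub_eq_zero hσ hR h ht
  rw [re_trace_relResolvent_mul_sub hσ hR ht] at gap
  set X := relResolvent (E σ) (E R) t - relResolvent σ R t
  have hσX := (Complex.nonneg_iff.1 (hσ.conjTranspose_mul_mul_same X).trace_nonneg).1
  have hRX := (Complex.nonneg_iff.1 (hR.mul_mul_conjTranspose_same X).trace_nonneg).1
  have hXσ : Xᴴ * σ = 0 := by
    refine mul_eq_zero_of_re_trace_eq_zero hσ ?_
    rw [conjTranspose_conjTranspose]
    nlinarith
  have hXR : X * R = 0 := mul_eq_zero_of_re_trace_eq_zero hR (by nlinarith)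
  refine ⟨?_, sub_eq_zero.1 (by rw [← sub_mul, hXR])⟩
  rw [← sub_eq_zero, ← mul_sub, ← conjTranspose_eq_zero, conjTranspose_mul, hσ.isHermitian.eq, hXσ]

theorem SaturatesMonotonicity.relModCfc_mul_eq (hsat : SaturatesMonotonicity E R σ)
    (hσ : σ.PosSemidef) (hR : R.PosSemidef) (h : SupportedOn R σ) (f : ℝ → ℝ) :
    σ * relModCfc f (E σ) (E R) = σ * relModCfc f σ R ∧
      relModCfc f (E σ) (E R) * R = relModCfc f σ R * R := by
  classical
  set s := Finset.image₂ (· / ·) (eigenvalueSet σ ∪ eigenvalueSet (E σ))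
    (eigenvalueSet R ∪ eigenvalueSet (E R))
  have s_nonneg : ∀ x ∈ s, 0 ≤ x := by
    intro x hx
    obtain ⟨a, ha, b, hb, rfl⟩ := Finset.mem_image₂.1 hx
    simp only [Finset.mem_union, mem_eigenvalueSet] at ha hb
    exact div_nonneg
      (ha.elim (spectrum_nonneg hσ) (spectrum_nonneg (CondExp.posSemidef_map hσ)))
      (hb.elim (spectrum_nonneg hR) (spectrum_nonneg (CondExp.posSemidef_map hR)))
  obtain ⟨c, hc⟩ := exists_eq_sum_inv_add f s_nonneg
  have expand : relModCfc f σ R = ∑ y ∈ s, c y • relResolvent σ R (y + 1) := by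
    simp only [relResolvent, ← relModCfc_sum]
    exact relModCfc_congr fun a ha b hb ↦ hc _ (Finset.mem_image₂_of_mem
      (Finset.mem_union_left _ (mem_eigenvalueSet.2 ha))
      (Finset.mem_union_left _ (mem_eigenvalueSet.2 hb)))
  have expand_map : relModCfc f (E σ) (E R) =
      ∑ y ∈ s, c y • relResolvent (E σ) (E R) (y + 1) := by
    simp only [relResolvent, ← relModCfc_sum]
    exact relModCfc_congr fun a ha b hb ↦ hc _ (Finset.mem_image₂_of_mem
      (Finset.mem_union_right _ (mem_eigenvalueSet.2 ha))
      (Finset.mem_union_right _ (mem_eigenvalueSet.2 hb)))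
  have resolvent (y) (hy : y ∈ s) :=
    hsat.relResolvent_mul_eq hσ hR h (add_pos_of_nonneg_of_pos (s_nonneg y hy) one_pos)
  constructor
  · simp only [expand, expand_map, Finset.mul_sum, mul_smul_comm]
    exact Finset.sum_congr rfl fun y hy ↦ by rw [(resolvent y hy).1]
  · simp only [expand, expand_map, Finset.sum_mul, smul_mul_assoc]
    exact Finset.sum_congr rfl fun y hy ↦ by rw [(resolvent y hy).2]

end EqualityCase

section Recovery

variable {n : Type*} [Fintype n] [DecidableEq n] {E F : CondExp n} {σ R : Matrix n n ℂ}

theorem SaturatesMonotonicity.suppPow_eq (hsat : SaturatesMonotonicity E R σ)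
    (hσ : σ.PosSemidef) (hR : R.PosSemidef) (h : SupportedOn R σ) (s : ℝ) :
    σ ^ₛ s * (E σ ^ₛ (-s) * E R ^ₛ s) = R ^ₛ s := by
  have hEσ := CondExp.posSemidef_map (E := E) hσ
  have hER := CondExp.posSemidef_map (E := E) hR
  have hmul := (hsat.relModCfc_mul_eq hσ hR h fun x ↦ if x = 0 then 0 else x ^ (-s)).1
  rw [relModCfc_rpow hσ hR, relModCfc_rpow hEσ hER] at hmul
  rw [← sub_add_cancel s 1, ← suppPow_mul_self hσ, sub_add_cancel, mul_assoc, hmul, ← mul_assoc,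
    ← mul_assoc, suppPow_mul_self hσ, suppPow_mul_suppPow hσ, sub_add_cancel, add_neg_cancel,
    h.mul_suppPow hR]

theorem SaturatesMonotonicity.suppPow_eq' (hsat : SaturatesMonotonicity E R σ)
    (hσ : σ.PosSemidef) (hR : R.PosSemidef) (h : SupportedOn R σ) (s : ℝ) :
    E R ^ₛ s * (E σ ^ₛ (-s) * σ ^ₛ s) = R ^ₛ s := by
  have := congrArg conjTranspose (hsat.suppPow_eq hσ hR h s)
  simpa only [conjTranspose_mul, (isHermitian_suppPow _ _).eq, mul_assoc] using this

theorem SaturatesMonotonicity.map_suppPow_mul_suppPow_zero (hsat : SaturatesMonotonicity E R σ)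
    (hσ : σ.PosSemidef) (hR : R.PosSemidef) (h : SupportedOn R σ) (s : ℝ) :
    E σ ^ₛ (-s) * E R ^ₛ s * R ^ₛ 0 = σ ^ₛ (-s) * R ^ₛ s := by
  have hEσ := CondExp.posSemidef_map (E := E) hσ
  have hER := CondExp.posSemidef_map (E := E) hR
  have hmul := (hsat.relModCfc_mul_eq hσ hR h fun x ↦ if x = 0 then 0 else x ^ (-s)).2
  rw [relModCfc_rpow hσ hR, relModCfc_rpow hEσ hER] at hmul
  rw [← add_neg_cancel 1, ← self_mul_suppPow hR, ← mul_assoc, hmul, mul_assoc, self_mul_suppPow hR,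
    mul_assoc, suppPow_mul_suppPow hR, add_neg_cancel, add_zero]

/-- The density `σ⁻¹ᐟ² R σ⁻¹ᐟ²` of `R` relative to `σ`. -/
noncomputable def relDensity (σ R : Matrix n n ℂ) : Matrix n n ℂ :=
  σ ^ₛ (-(1 / 2)) * R * σ ^ₛ (-(1 / 2))

theorem posSemidef_relDensity (σ : Matrix n n ℂ) (hR : R.PosSemidef) :
    (relDensity σ R).PosSemidef := by
  simpa only [relDensity, (isHermitian_suppPow _ _).eq] using
    hR.mul_mul_conjTranspose_same (σ ^ₛ (-(1 / 2)))

theorem isHermitian_relDensity (σ : Matrix n n ℂ) (hR : R.IsHermitian) :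
    (relDensity σ R).IsHermitian := by
  simpa only [relDensity, (isHermitian_suppPow _ _).eq] using
    isHermitian_mul_mul_conjTranspose (σ ^ₛ (-(1 / 2))) hR

theorem relDensity_mem {S : StarSubalgebra ℂ (Matrix n n ℂ)} (hσ : σ ∈ S) (hR : R ∈ S) :
    relDensity σ R ∈ S :=
  mul_mem (mul_mem (suppPow_mem hσ _) hR) (suppPow_mem hσ _)

theorem relDensity_eq_of_commute (hσ : σ.PosSemidef) (hR : R.PosSemidef) (h : SupportedOn R σ)
    (hcomm : Commute (relDensity σ R) σ) : relDensity σ R = R * σ ^ₛ (-1) := by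
  have hroot : relDensity σ R * σ ^ₛ (1 / 2) = σ ^ₛ (1 / 2) * relDensity σ R :=
    semiconjBy_cfc hσ.isHermitian hσ.isHermitian hcomm _
  have hsupp : σ ^ₛ 0 * R = R := by simpa only [suppPow_one hR.1] using h.mul_suppPow hR 1
  calc relDensity σ R = relDensity σ R * σ ^ₛ (1 / 2) * σ ^ₛ (-(1 / 2)) := by
        simp only [relDensity, mul_assoc, suppPow_mul_suppPow hσ, neg_add_cancel, zero_add]
    _ = σ ^ₛ 0 * R * σ ^ₛ (-1) := by
        rw [hroot, relDensity, ← mul_assoc, ← mul_assoc, suppPow_mul_suppPow hσ, mul_assoc,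
          suppPow_mul_suppPow hσ]
        norm_num
    _ = R * σ ^ₛ (-1) := by rw [hsupp]

theorem SaturatesMonotonicity.relDensity_map_mul_suppPow (hsat : SaturatesMonotonicity E R σ)
    (hσ : σ.PosSemidef) (hR : R.PosSemidef) (h : SupportedOn R σ) :
    relDensity (E σ) (E R) * σ ^ₛ (1 / 2) = σ ^ₛ (-(1 / 2)) * R := by
  have hER := CondExp.posSemidef_map (E := E) hR
  calc relDensity (E σ) (E R) * σ ^ₛ (1 / 2)
      = E σ ^ₛ (-(1 / 2)) * E R ^ₛ (1 / 2) *
          (E R ^ₛ (1 / 2) * (E σ ^ₛ (-(1 / 2)) * σ ^ₛ (1 / 2))) := by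
        rw [← mul_assoc, mul_assoc (E σ ^ₛ _), suppPow_half_mul_suppPow_half hER, relDensity]
        simp only [mul_assoc]
    _ = E σ ^ₛ (-(1 / 2)) * E R ^ₛ (1 / 2) * R ^ₛ 0 * R ^ₛ (1 / 2) := by
        rw [hsat.suppPow_eq' hσ hR h, mul_assoc _ (R ^ₛ 0), suppPow_mul_suppPow hR, zero_add]
    _ = σ ^ₛ (-(1 / 2)) * R := by
        rw [hsat.map_suppPow_mul_suppPow_zero hσ hR h, mul_assoc,
          suppPow_half_mul_suppPow_half hR]

theorem SaturatesMonotonicity.relDensity_map_mul_eq (hE : SaturatesMonotonicity E R σ)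
    (hF : SaturatesMonotonicity F R σ) (hσ : σ.PosSemidef) (hR : R.PosSemidef)
    (h : SupportedOn R σ) :
    relDensity (E σ) (E R) * σ = relDensity (F σ) (F R) * σ := by
  calc relDensity (E σ) (E R) * σ
      = relDensity (E σ) (E R) * σ ^ₛ (1 / 2) * σ ^ₛ (1 / 2) := by
        rw [mul_assoc, suppPow_half_mul_suppPow_half hσ]
    _ = relDensity (F σ) (F R) * σ ^ₛ (1 / 2) * σ ^ₛ (1 / 2) := by
        rw [hE.relDensity_map_mul_suppPow hσ hR h, hF.relDensity_map_mul_suppPow hσ hR h]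
    _ = relDensity (F σ) (F R) * σ := by rw [mul_assoc, suppPow_half_mul_suppPow_half hσ]

end Recovery

section CommutingExpectations

variable {n : Type*} [Fintype n] [DecidableEq n] {E F : CondExp n} {x X Y M : Matrix n n ℂ}

theorem CondExp.map_mem_of_comm (hEF : ∀ x, E (F x) = F (E x)) (hx : x ∈ F.range) :
    E x ∈ F.range := by
  rw [← map_of_mem hx, hEF]
  exact F.map_mem _

theorem mul_suppPow_eq_of_mul_map_eq (hM : M.PosSemidef) (h : X * E M = Y * E M) (s : ℝ) :
    X * M ^ₛ s = Y * M ^ₛ s := by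
  have hEM := CondExp.posSemidef_map (E := E) hM
  have factor : M ^ₛ s = E M * (E M ^ₛ (-1) * M ^ₛ s) := by
    rw [← mul_assoc, self_mul_suppPow hEM, add_neg_cancel,
      (CondExp.supportedOn_map hM).mul_suppPow hM]
  rw [factor, ← mul_assoc, h, mul_assoc]

end CommutingExpectations

/-- Conditional expectations `a`, `b`, `c`, `d`, each erasing one of four parties `A`, `B`, `C`,
`D`: an operator does not act on a party when it is in the range of the corresponding conditional
expectation. Operators on `AD` and `BC` commute, and the partial trace over `B` is cyclic for
operators on `BC` and `ABD`. -/
structure Parties (n : Type*) [Fintype n] [DecidableEq n] where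
  a : CondExp n
  b : CondExp n
  c : CondExp n
  d : CondExp n
  ab : ∀ x, a (b x) = b (a x)
  ac : ∀ x, a (c x) = c (a x)
  ad : ∀ x, a (d x) = d (a x)
  bc : ∀ x, b (c x) = c (b x)
  bd : ∀ x, b (d x) = d (b x)
  cd : ∀ x, c (d x) = d (c x)
  commute : ∀ x ∈ b.range, x ∈ c.range → ∀ y ∈ a.range, y ∈ d.range → Commute x y
  map_mul_comm : ∀ x ∈ a.range, x ∈ d.range → ∀ y ∈ c.range, b (x * y) = b (y * x)

namespace Parties

open CondExp

variable {n : Type*} [Fintype n] [DecidableEq n] (P : Parties n)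

section ConditionalDensity

variable {R : Matrix n n ℂ}

theorem commute_relDensity (hR : R.PosSemidef) (hRd : R ∈ P.d.range)
    (ha : SaturatesMonotonicity P.a R (P.c R)) (hb : SaturatesMonotonicity P.b R (P.c R)) :
    Commute (relDensity (P.b (P.c R)) (P.b R)) (P.b (P.c R)) := by
  have hσ := posSemidef_map (E := P.c) hR
  have hσd : P.c R ∈ P.d.range := map_mem_of_comm P.cd hRd
  have hKA := isHermitian_relDensity (P.b (P.c R)) (isHermitian_map (E := P.b) hR.isHermitian)
  have hKB := isHermitian_relDensity (P.a (P.c R)) (isHermitian_map (E := P.a) hR.isHermitian)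
  have hKAb := relDensity_mem (P.b.map_mem (P.c R)) (P.b.map_mem R)
  have hKBa := relDensity_mem (P.a.map_mem (P.c R)) (P.a.map_mem R)
  have hKBd := relDensity_mem (map_mem_of_comm P.ad hσd) (map_mem_of_comm P.ad hRd)
  have hmul := hb.relDensity_map_mul_eq ha hσ hR (supportedOn_map hR)
  have hmul' := congrArg conjTranspose hmul
  rw [conjTranspose_mul, conjTranspose_mul, hKA.eq, hKB.eq, hσ.isHermitian.eq] at hmul'
  rw [Commute, SemiconjBy, ← map_mul_left hKAb, hmul, P.map_mul_comm _ hKBa hKBd _ (P.c.map_mem R),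
    ← hmul', map_mul_right hKAb]

theorem relDensity_mul_eq (hR : R.PosSemidef) (hRd : R ∈ P.d.range)
    (ha : SaturatesMonotonicity P.a R (P.c R)) (hb : SaturatesMonotonicity P.b R (P.c R)) :
    relDensity (P.b (P.c R)) (P.b R) * P.c R = R := by
  have hσ := posSemidef_map (E := P.c) hR
  have hsupp : SupportedOn R (P.c R) := supportedOn_map hR
  have hbR := posSemidef_map (E := P.b) hR
  have petz := hb.suppPow_eq' hσ hR hsupp 1
  rw [suppPow_one hR.1, suppPow_one hσ.1, suppPow_one hbR.1] at petz
  rw [relDensity_eq_of_commute (posSemidef_map hσ) hbR (hsupp.map hσ)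
    (P.commute_relDensity hR hRd ha hb), mul_assoc, petz]

end ConditionalDensity

section Transfer

variable {ρ KA KB : Matrix n n ℂ}

theorem mul_suppPow_mul_map_eq (hρ : ρ.PosSemidef) (hρc : ρ ∈ P.c.range) (hBa : KB ∈ P.a.range)
    (hBd : KB ∈ P.d.range) (hAB : KA * P.d ρ = KB * P.d ρ)
    (hsat : SaturatesMonotonicity P.a ρ (P.b ρ)) :
    KA * (P.b ρ ^ₛ (1 / 2) * P.a (P.b ρ) ^ₛ (-(1 / 2))) * P.a ρ =
      P.b ρ ^ₛ (1 / 2) * P.a (P.b ρ) ^ₛ (-(1 / 2)) * (KB * P.a ρ) := by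
  have hbρ := posSemidef_map (E := P.b) hρ
  have haρ := posSemidef_map (E := P.a) hρ
  have hbc : P.b ρ ∈ P.c.range := map_mem_of_comm P.bc hρc
  have habb : P.a (P.b ρ) ∈ P.b.range := P.ab ρ ▸ P.b.map_mem _
  have hcomm : Commute (P.b ρ ^ₛ (1 / 2) * P.a (P.b ρ) ^ₛ (-(1 / 2))) KB :=
    P.commute _ (mul_mem (suppPow_mem (P.b.map_mem ρ) _) (suppPow_mem habb _))
      (mul_mem (suppPow_mem hbc _) (suppPow_mem (map_mem_of_comm P.ac hbc) _)) _ hBa hBd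
  have petz := hsat.suppPow_eq hbρ hρ (supportedOn_map hρ) (1 / 2)
  rw [← mul_assoc] at petz
  set G := P.b ρ ^ₛ (1 / 2) * P.a (P.b ρ) ^ₛ (-(1 / 2))
  calc KA * G * P.a ρ = KA * (G * P.a ρ ^ₛ (1 / 2)) * P.a ρ ^ₛ (1 / 2) := by
        simp only [mul_assoc, suppPow_half_mul_suppPow_half haρ]
    _ = KB * (G * P.a ρ ^ₛ (1 / 2)) * P.a ρ ^ₛ (1 / 2) := by
        rw [petz, mul_suppPow_eq_of_mul_map_eq hρ hAB]
    _ = KB * G * P.a ρ := by simp only [mul_assoc, suppPow_half_mul_suppPow_half haρ]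
    _ = G * (KB * P.a ρ) := by rw [← hcomm.eq, mul_assoc]

theorem exists_mul_suppPow_eq (hρ : ρ.PosSemidef) (hρc : ρ ∈ P.c.range) (hAb : KA ∈ P.b.range)
    (hB : KB.IsHermitian) (hBa : KB ∈ P.a.range) (hBd : KB ∈ P.d.range)
    (hAB : KA * P.d ρ = KB * P.d ρ) (hsat : SaturatesMonotonicity P.a ρ (P.b ρ)) :
    ∃ KD : Matrix n n ℂ, KD.IsHermitian ∧ KD ∈ P.a.range ∧ KD ∈ P.b.range ∧
      KA * P.b ρ ^ₛ (1 / 2) = P.b ρ ^ₛ (1 / 2) * KD := by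
  have hbρ := posSemidef_map (E := P.b) hρ
  have hω := posSemidef_map (E := P.a) hbρ
  have habb : P.a (P.b ρ) ∈ P.b.range := P.ab ρ ▸ P.b.map_mem _
  have hW : (P.b (KB * P.a ρ)).IsHermitian := by
    rw [IsHermitian, ← map_conjTranspose, conjTranspose_mul, hB.eq,
      (isHermitian_map hρ.isHermitian).eq,
      P.map_mul_comm _ hBa hBd _ (map_mem_of_comm P.ac hρc)]
  have hWa : P.b (KB * P.a ρ) ∈ P.a.range :=
    map_mem_of_comm (fun x ↦ (P.ab x).symm) (mul_mem hBa (P.a.map_mem ρ))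
  refine ⟨relDensity (P.a (P.b ρ)) (P.b (KB * P.a ρ)), isHermitian_relDensity _ hW,
    relDensity_mem (P.a.map_mem _) hWa, relDensity_mem habb (P.b.map_mem _), ?_⟩
  have traced := congrArg P.b (P.mul_suppPow_mul_map_eq hρ hρc hBa hBd hAB hsat)
  have hGb : P.b ρ ^ₛ (1 / 2) * P.a (P.b ρ) ^ₛ (-(1 / 2)) ∈ P.b.range :=
    mul_mem (suppPow_mem (P.b.map_mem ρ) _) (suppPow_mem habb _)
  rw [map_mul_left (mul_mem hAb hGb), map_mul_left hGb, ← P.ab] at traced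
  calc KA * P.b ρ ^ₛ (1 / 2)
      = KA * (P.b ρ ^ₛ (1 / 2) * P.a (P.b ρ) ^ₛ (-(1 / 2))) * P.a (P.b ρ)
          * P.a (P.b ρ) ^ₛ (-(1 / 2)) := by
        rw [mul_assoc KA, mul_assoc KA, mul_assoc _ _ (P.a (P.b ρ)), mul_assoc (P.b ρ ^ₛ _),
          suppPow_mul_self hω, suppPow_mul_suppPow hω]
        norm_num only
        rw [(supportedOn_map hbρ).suppPow_mul hbρ]
    _ = P.b ρ ^ₛ (1 / 2) * relDensity (P.a (P.b ρ)) (P.b (KB * P.a ρ)) := by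
        rw [traced, relDensity]
        simp only [mul_assoc]

end Transfer

end Parties

section Entropy

variable {n : Type*} [Fintype n] [DecidableEq n] {E F : CondExp n}
  {K M R x y σ : Matrix n n ℂ}

/-- The von Neumann entropy in nats. -/
noncomputable def natEntropy (M : Matrix n n ℂ) : ℝ := -(M * cfc Real.log M).trace.re

theorem CondExp.trace_map_mul (hx : x ∈ E.range) (y : Matrix n n ℂ) :
    (E y * x).trace = (y * x).trace := by
  rw [trace_mul_comm, trace_mul_map hx, trace_mul_comm]

theorem CondExp.commute_map (hx : x ∈ E.range) (h : Commute x y) : Commute x (E y) := by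
  rw [Commute, SemiconjBy, ← map_mul_left hx, ← map_mul_right hx, h.eq]

theorem CondExp.trace_mul_cfc_map (f : ℝ → ℝ) (R : Matrix n n ℂ) :
    (R * cfc f (E R)).trace = (E R * cfc f (E R)).trace :=
  (trace_map_mul (cfc_mem_starSubalgebra (E.map_mem R) f) R).symm

theorem saturatesMonotonicity_map_iff (hEF : ∀ x, E (F x) = F (E x)) (R : Matrix n n ℂ) :
    SaturatesMonotonicity E R (F R) ↔
      natEntropy (F R) + natEntropy (E R) = natEntropy R + natEntropy (E (F R)) := by
  rw [SaturatesMonotonicity, CondExp.trace_mul_cfc_map, hEF, CondExp.trace_mul_cfc_map]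
  simp only [natEntropy]
  constructor <;> intro h <;> linarith

theorem supportedOn_of_mul_eq (hσ : σ.PosSemidef) (h : K * σ = R) : SupportedOn R σ := by
  rw [SupportedOn, ← h, mul_assoc, self_mul_suppPow hσ, add_zero, suppPow_one hσ.isHermitian]

theorem supportedOn_left_of_mul_eq (hK : K.PosSemidef) (hσ : σ.IsHermitian) (hR : R.IsHermitian)
    (h : K * σ = R) : SupportedOn R K :=
  supportedOn_of_mul_eq hK (((hK.1.commute_iff hσ).2 (h ▸ hR)).eq ▸ h)

theorem natEntropy_map_sub_natEntropy (hR : R.PosSemidef) (hK : K.PosSemidef) (h : K * F R = R) :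
    natEntropy (F R) - natEntropy R = (R * cfc Real.log K).trace.re := by
  have hFR := CondExp.posSemidef_map (E := F) hR
  have hcomm : Commute K (F R) := (hK.1.commute_iff hFR.1).2 (h.symm ▸ hR.1)
  have hRK := (supportedOn_left_of_mul_eq hK hFR.1 hR.1 h).mul_suppPow hR 1
  have hRF := (supportedOn_of_mul_eq hFR h).mul_suppPow hR 1
  rw [suppPow_one hR.1] at hRK hRF
  have hlog := cfc_log_mul hK.1 hFR.1 hcomm hRK hRF
  rw [h] at hlog
  rw [natEntropy, natEntropy, ← CondExp.trace_mul_cfc_map, trace_mul_comm R (cfc _ R), hlog,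
    add_mul, trace_add, Complex.add_re, trace_mul_comm R, trace_mul_comm R]
  ring

theorem re_trace_mul_log_le_natEntropy_sub (hM : M.PosSemidef) (hK : K.IsHermitian)
    (hMK : SupportedOn M K) (hcomm : Commute K (F M)) (hKM : (K * F M).PosSemidef)
    (htr : M.trace = (K * F M).trace) :
    (M * cfc Real.log K).trace.re ≤ natEntropy (F M) - natEntropy M := by
  have hFM := CondExp.posSemidef_map (E := F) hM
  have hMK' := hMK.mul_suppPow hM 1
  have hMF := (CondExp.supportedOn_map (E := F) hM).mul_suppPow hM 1
  rw [suppPow_one hM.1] at hMK' hMF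
  have hsupp : SupportedOn M (K * F M) := by
    have := congrArg conjTranspose (suppPow_zero_mul_mul hK hFM.1 hcomm hMK' hMF)
    rwa [conjTranspose_mul, (isHermitian_suppPow _ _).eq, hM.1.eq] at this
  have klein := re_trace_mul_log_le hM hKM htr hsupp
  rw [trace_mul_comm, cfc_log_mul hK hFM.1 hcomm hMK' hMF, add_mul, trace_add, Complex.add_re,
    trace_mul_comm _ M, trace_mul_comm _ M, CondExp.trace_mul_cfc_map] at klein
  simp only [natEntropy]
  linarith

end Entropy

section Intertwining

variable {n : Type*} [Fintype n] [DecidableEq n] {K K' ρ ω : Matrix n n ℂ}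

theorem suppPow_mul_eq_of_mul_suppPow_eq (hK : K.IsHermitian) (hK' : K'.IsHermitian) {s : ℝ}
    (h : K * ω ^ₛ s = ω ^ₛ s * K') : K' * ω ^ₛ s = ω ^ₛ s * K := by
  have := congrArg conjTranspose h
  rw [conjTranspose_mul, conjTranspose_mul, hK.eq, hK'.eq, (isHermitian_suppPow _ _).eq] at this
  exact this.symm

theorem commute_of_mul_suppPow_eq (hω : ω.PosSemidef) (hK : K.IsHermitian) (hK' : K'.IsHermitian)
    (h : K * ω ^ₛ (1 / 2) = ω ^ₛ (1 / 2) * K') : Commute K ω := by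
  rw [← suppPow_half_mul_suppPow_half hω, Commute, SemiconjBy, ← mul_assoc, h, mul_assoc,
    suppPow_mul_eq_of_mul_suppPow_eq hK hK' h, mul_assoc]

theorem mul_cfc_eq_of_mul_suppPow_eq (hω : ω.PosSemidef) (hK : K.IsHermitian)
    (hK' : K'.IsHermitian) (h : K * ω ^ₛ (1 / 2) = ω ^ₛ (1 / 2) * K') (hρ : SupportedOn ρ ω)
    (f : ℝ → ℝ) : ρ * cfc f K = ρ * cfc f K' := by
  have hcomm : Commute K (ω ^ₛ (1 / 2)) := (commute_of_mul_suppPow_eq hω hK hK' h).symm.cfc_real _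
    |>.symm
  have root : ω ^ₛ (1 / 2) * cfc f K = ω ^ₛ (1 / 2) * cfc f K' :=
    (hcomm.cfc_real f).eq.symm.trans (semiconjBy_cfc hK' hK h.symm f).symm
  have factor : ρ = ρ * ω ^ₛ (-(1 / 2)) * ω ^ₛ (1 / 2) := by
    rw [mul_assoc, suppPow_mul_suppPow hω, neg_add_cancel, hρ]
  rw [factor, mul_assoc, root, ← mul_assoc]

theorem mul_eq_suppPow_mul_mul_suppPow (hω : ω.PosSemidef) (hK : K.IsHermitian)
    (hK' : K'.IsHermitian) (h : K * ω ^ₛ (1 / 2) = ω ^ₛ (1 / 2) * K') :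
    K' * ω = ω ^ₛ (1 / 2) * K * ω ^ₛ (1 / 2) := by
  rw [← suppPow_mul_eq_of_mul_suppPow_eq hK hK' h, mul_assoc, suppPow_half_mul_suppPow_half hω]

theorem SupportedOn.trans (h : SupportedOn ρ K) (h' : SupportedOn K ω) (hK : K.PosSemidef) :
    SupportedOn ρ ω := by
  rw [SupportedOn, ← h, mul_assoc, h'.suppPow_mul hK]

end Intertwining

namespace Parties

open CondExp

variable {n : Type*} [Fintype n] [DecidableEq n] (P : Parties n) {ρ KA KD : Matrix n n ℂ}

theorem supportedOn_of_mul_map_eq (hρ : ρ.PosSemidef) (hKA : KA.PosSemidef)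
    (hKAρ : KA * P.c (P.d ρ) = P.d ρ) (hKD : KD.IsHermitian)
    (hAD : KA * P.b (P.c ρ) ^ₛ (1 / 2) = P.b (P.c ρ) ^ₛ (1 / 2) * KD) : SupportedOn ρ KD := by
  have hdρ := posSemidef_map (E := P.d) hρ
  have hcρ := posSemidef_map (E := P.c) hρ
  have hρA : SupportedOn ρ KA := (supportedOn_map hρ).trans
    (supportedOn_left_of_mul_eq hKA (isHermitian_map hdρ.1) hdρ.1 hKAρ) hdρ
  have hρω : SupportedOn ρ (P.b (P.c ρ)) := (supportedOn_map hρ).trans (supportedOn_map hcρ) hcρ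
  exact (mul_cfc_eq_of_mul_suppPow_eq (posSemidef_map hcρ) hKA.1 hKD hAD hρω _).symm.trans hρA

theorem trace_map_mul_log_eq (hρ : ρ.PosSemidef) (hKA : KA.IsHermitian) (hAd : KA ∈ P.d.range)
    (hKD : KD.IsHermitian) (hDa : KD ∈ P.a.range) (hDb : KD ∈ P.b.range)
    (hAD : KA * P.b (P.c ρ) ^ₛ (1 / 2) = P.b (P.c ρ) ^ₛ (1 / 2) * KD) :
    (P.d ρ * cfc Real.log KA).trace = (P.a (P.b ρ) * cfc Real.log KD).trace := by
  have hcρ := posSemidef_map (E := P.c) hρ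
  rw [trace_map_mul (cfc_mem_starSubalgebra hAd _), trace_map_mul (cfc_mem_starSubalgebra hDa _),
    trace_map_mul (cfc_mem_starSubalgebra hDb _), mul_cfc_eq_of_mul_suppPow_eq (posSemidef_map hcρ)
    hKA hKD hAD ((supportedOn_map hρ).trans (supportedOn_map hcρ) hcρ)]

theorem trace_mul_map_eq (hρ : ρ.PosSemidef) (hKA : KA.IsHermitian) (hAb : KA ∈ P.b.range)
    (hAd : KA ∈ P.d.range) (hKAρ : KA * P.c (P.d ρ) = P.d ρ) (hKD : KD.IsHermitian)
    (hDa : KD ∈ P.a.range)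
    (hAD : KA * P.b (P.c ρ) ^ₛ (1 / 2) = P.b (P.c ρ) ^ₛ (1 / 2) * KD) :
    (KD * P.a (P.b (P.c ρ))).trace = ρ.trace := by
  have hω := posSemidef_map (E := P.b) (posSemidef_map (E := P.c) hρ)
  rw [trace_mul_map hDa, mul_eq_suppPow_mul_mul_suppPow hω hKA hKD hAD, trace_mul_comm, ← mul_assoc,
    suppPow_half_mul_suppPow_half hω, trace_mul_comm, trace_mul_map hAb, ← trace_mul_map hAd,
    ← P.cd, hKAρ, CondExp.trace_map]

theorem natEntropy_map_sub_le (hρ : ρ.PosSemidef) (hKA : KA.PosSemidef) (hAb : KA ∈ P.b.range)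
    (hAd : KA ∈ P.d.range) (hKAρ : KA * P.c (P.d ρ) = P.d ρ) (hKD : KD.IsHermitian)
    (hDa : KD ∈ P.a.range) (hDb : KD ∈ P.b.range)
    (hAD : KA * P.b (P.c ρ) ^ₛ (1 / 2) = P.b (P.c ρ) ^ₛ (1 / 2) * KD) :
    natEntropy (P.c (P.d ρ)) - natEntropy (P.d ρ) ≤
      natEntropy (P.a (P.b (P.c ρ))) - natEntropy (P.a (P.b ρ)) := by
  have hω := posSemidef_map (E := P.b) (posSemidef_map (E := P.c) hρ)
  have hcM : P.c (P.a (P.b ρ)) = P.a (P.b (P.c ρ)) := by rw [← P.ac, P.bc]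
  have hsupp : SupportedOn (P.a (P.b ρ)) KD := by
    rw [SupportedOn, ← map_mul_right (suppPow_mem hDa 0), ← map_mul_right (suppPow_mem hDb 0),
      P.supportedOn_of_mul_map_eq hρ hKA hKAρ hKD hAD]
  have hcomm : Commute KD (P.a (P.b (P.c ρ))) := commute_map hDa <|
    commute_of_mul_suppPow_eq hω hKD hKA.1 (suppPow_mul_eq_of_mul_suppPow_eq hKA.1 hKD hAD)
  have hpos : (KD * P.a (P.b (P.c ρ))).PosSemidef := by
    have h := hKA.mul_mul_conjTranspose_same (P.b (P.c ρ) ^ₛ (1 / 2))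
    rw [(isHermitian_suppPow _ _).eq, ← mul_eq_suppPow_mul_mul_suppPow hω hKA.1 hKD hAD] at h
    exact map_mul_left hDa (P.b (P.c ρ)) ▸ posSemidef_map h
  rw [natEntropy_map_sub_natEntropy (posSemidef_map hρ) hKA hKAρ,
    P.trace_map_mul_log_eq hρ hKA.1 hAd hKD hDa hDb hAD, ← hcM]
  rw [← hcM] at hcomm hpos
  refine re_trace_mul_log_le_natEntropy_sub (posSemidef_map (posSemidef_map hρ)) hKD hsupp hcomm
    hpos ?_
  rw [CondExp.trace_map, CondExp.trace_map, hcM,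
    P.trace_mul_map_eq hρ hKA.1 hAb hAd hKAρ hKD hDa hAD]

theorem natEntropy_sub_le_of_saturatesMonotonicity (hρ : ρ.PosSemidef)
    (ha : SaturatesMonotonicity P.a (P.d ρ) (P.c (P.d ρ)))
    (hb : SaturatesMonotonicity P.b (P.d ρ) (P.c (P.d ρ)))
    (hab : SaturatesMonotonicity P.a (P.c ρ) (P.b (P.c ρ))) :
    natEntropy (P.c (P.d ρ)) - natEntropy (P.d ρ) ≤
      natEntropy (P.a (P.b (P.c ρ))) - natEntropy (P.a (P.b ρ)) := by
  have hR := posSemidef_map (E := P.d) hρ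
  have hRd := P.d.map_mem ρ
  have hσd : P.c (P.d ρ) ∈ P.d.range := map_mem_of_comm P.cd hRd
  have hbR := posSemidef_map (E := P.b) hR
  have hAb := relDensity_mem (P.b.map_mem (P.c (P.d ρ))) (P.b.map_mem (P.d ρ))
  have hAd := relDensity_mem (map_mem_of_comm P.bd hσd) (map_mem_of_comm P.bd hRd)
  have hBd := relDensity_mem (map_mem_of_comm P.ad hσd) (map_mem_of_comm P.ad hRd)
  have hAB := hb.relDensity_map_mul_eq ha (posSemidef_map hR) hR (supportedOn_map hR)
  obtain ⟨KD, hKD, hDa, hDb, hAD⟩ := P.exists_mul_suppPow_eq (posSemidef_map hρ) (P.c.map_mem ρ)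
    hAb (isHermitian_relDensity _ (isHermitian_map hR.1))
    (relDensity_mem (P.a.map_mem _) (P.a.map_mem _)) hBd (P.cd ρ ▸ hAB) hab
  exact P.natEntropy_map_sub_le hρ (posSemidef_relDensity _ hbR) hAb hAd
    (P.relDensity_mul_eq hR hRd ha hb) hKD hDa hDb hAD

end Parties

section PartialTrace

variable {X W Ω : Type*} [Fintype X]

/-- The partial trace over the first factor of a factorization `X × W ≃ Ω`. -/
def partialTrace (g : X × W ≃ Ω) (M : Matrix Ω Ω ℂ) : Matrix W W ℂ :=
  of fun w w' ↦ ∑ x, M (g (x, w)) (g (x, w'))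

theorem isHermitian_partialTrace (g : X × W ≃ Ω) {M : Matrix Ω Ω ℂ} (hM : M.IsHermitian) :
    (partialTrace g M).IsHermitian := by
  ext w w'
  simp [partialTrace, hM.apply]

theorem trace_partialTrace [Fintype W] [Fintype Ω] (g : X × W ≃ Ω) (M : Matrix Ω Ω ℂ) :
    (partialTrace g M).trace = M.trace := by
  simp only [trace, diag_apply, partialTrace, of_apply, ← g.sum_comp, Fintype.sum_prod_type]
  exact Finset.sum_comm

end PartialTrace

section Ampliation

open scoped Kronecker

variable {X W Ω : Type*} [Fintype X] [DecidableEq X] [Fintype W] [DecidableEq W] [Fintype Ω]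
  [DecidableEq Ω]

/-- The embedding `M ↦ 1 ⊗ M` of the operators on the second factor of `X × W ≃ Ω`. -/
def ampliation (g : X × W ≃ Ω) : Matrix W W ℂ →⋆ₐ[ℂ] Matrix Ω Ω ℂ where
  toFun M := reindexAlgEquiv ℂ ℂ g (1 ⊗ₖ M)
  map_one' := by rw [one_kronecker_one, map_one]
  map_zero' := by rw [kronecker_zero, map_zero]
  map_mul' M N := by rw [← map_mul, ← mul_kronecker_mul, one_mul]
  map_add' M N := by rw [← map_add, kronecker_add]
  commutes' r := by
    rw [Algebra.algebraMap_eq_smul_one, kronecker_smul, one_kronecker_one, map_smul, map_one,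
      Algebra.algebraMap_eq_smul_one]
  map_star' M := by simp [star_eq_conjTranspose, conjTranspose_kronecker]

theorem ampliation_apply (g : X × W ≃ Ω) (M : Matrix W W ℂ) (x x' : X) (w w' : W) :
    ampliation g M (g (x, w)) (g (x', w')) = if x = x' then M w w' else 0 := by
  simp [ampliation, one_apply]

theorem trace_ampliation_mul (g : X × W ≃ Ω) (M : Matrix W W ℂ) (N : Matrix Ω Ω ℂ) :
    (ampliation g M * N).trace = (M * partialTrace g N).trace := by
  simp only [trace, diag_apply, mul_apply, ← g.sum_comp, Fintype.sum_prod_type, ampliation_apply,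
    ite_mul, zero_mul, partialTrace, of_apply, Finset.mul_sum, Finset.sum_ite_irrel,
    Finset.sum_const_zero, Finset.sum_ite_eq, Finset.mem_univ, if_true]
  rw [Finset.sum_comm]
  exact Finset.sum_congr rfl fun _ _ ↦ Finset.sum_comm

theorem partialTrace_ampliation (g : X × W ≃ Ω) (M : Matrix W W ℂ) :
    partialTrace g (ampliation g M) = (Fintype.card X : ℂ) • M := by
  ext w w'
  simp [partialTrace, ampliation_apply]

theorem ampliation_cfc (g : X × W ≃ Ω) {M : Matrix W W ℂ} (hM : M.IsHermitian) (f : ℝ → ℝ) :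
    ampliation g (cfc f M) = cfc f (ampliation g M) :=
  (ampliation g).map_cfc f M (continuousOn_spectrum f M)
    (ampliation g).toLinearMap.continuous_of_finiteDimensional hM.isSelfAdjoint
    (hM.isSelfAdjoint.map (ampliation g))

theorem commute_ampliation (g : X × W ≃ Ω) (M : Matrix W W ℂ) (N : Matrix X X ℂ) :
    Commute (ampliation g M) (ampliation ((Equiv.prodComm W X).trans g) N) := by
  have h : ampliation ((Equiv.prodComm W X).trans g) N = reindexAlgEquiv ℂ ℂ g (N ⊗ₖ 1) := by
    ext p q
    simp [ampliation, one_apply, mul_comm, Prod.swap]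
  rw [h, Commute, SemiconjBy]
  change reindexAlgEquiv ℂ ℂ g (1 ⊗ₖ M) * _ = _ * reindexAlgEquiv ℂ ℂ g (1 ⊗ₖ M)
  simp only [← map_mul, ← mul_kronecker_mul, one_mul, mul_one]

end Ampliation

theorem nonempty_of_trace_eq_one {n : Type*} [Fintype n] {M : Matrix n n ℂ} (h : M.trace = 1) :
    Nonempty n := by
  by_contra hn
  rw [not_nonempty_iff] at hn
  simp [trace] at h

section Erase

variable {X W Ω : Type*} [Fintype X] [DecidableEq X] [Nonempty X] [Fintype W] [DecidableEq W]
  [Fintype Ω] [DecidableEq Ω]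

/-- The conditional expectation `M ↦ (1 / |X|) ⊗ tr_X M` erasing the first factor of
`X × W ≃ Ω`. -/
noncomputable def erase (g : X × W ≃ Ω) : CondExp Ω where
  toFun M := (Fintype.card X : ℂ)⁻¹ • ampliation g (partialTrace g M)
  range := (ampliation g).range
  map_mem' M := SMulMemClass.smul_mem _ ⟨_, rfl⟩
  trace_mul_map' := by
    rintro _ ⟨M, rfl⟩ N
    change (ampliation g M * _).trace = (ampliation g M * N).trace
    rw [mul_smul_comm, trace_smul, trace_ampliation_mul, partialTrace_ampliation, mul_smul_comm,
      trace_smul, inv_smul_smul₀ (Nat.cast_ne_zero.2 Fintype.card_ne_zero), trace_ampliation_mul]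

theorem erase_apply (g : X × W ≃ Ω) (M : Matrix Ω Ω ℂ) (x x' : X) (w w' : W) :
    erase g M (g (x, w)) (g (x', w')) =
      if x = x' then (Fintype.card X : ℂ)⁻¹ * ∑ y, M (g (y, w)) (g (y, w')) else 0 := by
  simp [erase, ampliation_apply, partialTrace]

variable {Y V U : Type*} [Fintype Y] [DecidableEq Y] [Nonempty Y] [Fintype V] [DecidableEq V]
  {g : X × W ≃ Ω} {h : Y × V ≃ Ω} {k : (X × Y) × U ≃ Ω} (w : Y → U → W) (v : X → U → V)

theorem erase_erase_apply (hg : ∀ x y u, k ((x, y), u) = g (x, w y u))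
    (hh : ∀ x y u, k ((x, y), u) = h (y, v x u)) (M : Matrix Ω Ω ℂ) (x x' : X) (y y' : Y)
    (u u' : U) :
    erase g (erase h M) (k ((x, y), u)) (k ((x', y'), u')) = if x = x' ∧ y = y' then
      (Fintype.card X * Fintype.card Y : ℂ)⁻¹ * ∑ s, ∑ t, M (k ((s, t), u)) (k ((s, t), u'))
      else 0 := by
  have inner (s : X) : erase h M (g (s, w y u)) (g (s, w y' u')) = if y = y' then
      (Fintype.card Y : ℂ)⁻¹ * ∑ t, M (k ((s, t), u)) (k ((s, t), u')) else 0 := by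
    simp only [← hg, hh, erase_apply]
  rw [hg, hg, erase_apply]
  simp only [inner, ite_and]
  by_cases hx : x = x' <;> by_cases hy : y = y' <;>
    simp [hx, hy, Finset.mul_sum, mul_assoc, mul_left_comm]

theorem erase_comm (hg : ∀ x y u, k ((x, y), u) = g (x, w y u))
    (hh : ∀ x y u, k ((x, y), u) = h (y, v x u)) (M : Matrix Ω Ω ℂ) :
    erase g (erase h M) = erase h (erase g M) := by
  let k' : (Y × X) × U ≃ Ω := ((Equiv.prodComm Y X).prodCongr (Equiv.refl U)).trans k
  have hk' (x y u) : k ((x, y), u) = k' ((y, x), u) := rfl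
  ext p q
  obtain ⟨⟨⟨x, y⟩, u⟩, rfl⟩ := k.surjective p
  obtain ⟨⟨⟨x', y'⟩, u'⟩, rfl⟩ := k.surjective q
  rw [erase_erase_apply w v hg hh, hk', hk',
    erase_erase_apply v w (fun y x u ↦ hh x y u) (fun y x u ↦ hg x y u), Finset.sum_comm]
  simp only [hk', and_comm, mul_comm]

theorem erase_erase [Fintype U] [DecidableEq U] (hg : ∀ x y u, k ((x, y), u) = g (x, w y u))
    (hh : ∀ x y u, k ((x, y), u) = h (y, v x u)) (M : Matrix Ω Ω ℂ) :
    erase g (erase h M) = erase k M := by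
  ext p q
  obtain ⟨⟨⟨x, y⟩, u⟩, rfl⟩ := k.surjective p
  obtain ⟨⟨⟨x', y'⟩, u'⟩, rfl⟩ := k.surjective q
  rw [erase_erase_apply w v hg hh, erase_apply]
  simp only [Prod.mk.injEq, Fintype.card_prod, Nat.cast_mul, Fintype.sum_prod_type]

theorem erase_mul_comm {Z : Type*} [Fintype Z] [DecidableEq Z] [Nonempty Z] [Fintype U]
    [DecidableEq U] {g : X × Y × Z ≃ Ω} {h : Y × V ≃ Ω} {k : Z × U ≃ Ω} (v : X → Z → V)
    (u : X → Y → U)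
    (hh : ∀ x y z, g (x, y, z) = h (y, v x z)) (hk : ∀ x y z, g (x, y, z) = k (z, u x y))
    {M N : Matrix Ω Ω ℂ} (hM : M ∈ (erase g).range) (hN : N ∈ (erase k).range) :
    erase h (M * N) = erase h (N * M) := by
  obtain ⟨M, rfl⟩ := hM
  obtain ⟨N, rfl⟩ := hN
  change erase h (ampliation g M * ampliation k N) = erase h (ampliation k N * ampliation g M)
  ext p q
  obtain ⟨⟨x, y, z⟩, rfl⟩ := g.surjective p
  obtain ⟨⟨x', y', z'⟩, rfl⟩ := g.surjective q
  have hkN (p q : X × Y × Z) : ampliation k N (g p) (g q) =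
      if p.2.2 = q.2.2 then N (u p.1 p.2.1) (u q.1 q.2.1) else 0 := by
    rw [hk, hk, ampliation_apply]
  rw [hh, hh, erase_apply, erase_apply]
  simp only [← hh, mul_apply, ← g.sum_comp, ampliation_apply, hkN, Fintype.sum_prod_type]
  simp only [mul_ite, ite_mul, mul_zero, zero_mul, Finset.sum_ite_irrel, Finset.sum_const_zero,
    Finset.sum_ite_eq, Finset.sum_ite_eq', Finset.mem_univ, if_true]
  rw [Finset.sum_comm]
  simp only [mul_comm]

end Erase

section EntropyOfMarginals

variable {W : Type*} [Fintype W] [DecidableEq W] {M : Matrix W W ℂ}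

theorem trace_cfc (hM : M.IsHermitian) (f : ℝ → ℝ) :
    (cfc f M).trace = ∑ i, (f (hM.eigenvalues i) : ℂ) := by
  rw [hM.cfc_eq, IsHermitian.cfc, Unitary.conjStarAlgAut_apply, trace_mul_comm, ← mul_assoc]
  simp [trace]

theorem natEntropy_eq (hM : M.IsHermitian) : natEntropy M = Real.log 2 * vNEntropy M := by
  have h : M * cfc Real.log M = cfc (fun x ↦ x * Real.log x) M := by
    rw [← cfc_mul_cfc, cfc_id' ℝ M hM.isSelfAdjoint]
  rw [natEntropy, h, trace_cfc hM, vNEntropy, dif_pos hM, mul_neg, Finset.mul_sum,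
    Complex.re_sum]
  refine congrArg Neg.neg (Finset.sum_congr rfl fun i _ ↦ ?_)
  have := Real.log_pos one_lt_two
  rw [Complex.ofReal_re, Real.logb]
  field_simp

variable {X Ω : Type*} [Fintype X] [DecidableEq X] [Nonempty X] [Fintype Ω] [DecidableEq Ω]

theorem mul_cfc_log_smul (hM : M.IsHermitian) {c : ℝ} (hc : c ≠ 0) :
    M * cfc Real.log (c • M) = Real.log c • M + M * cfc Real.log M := by
  have mul_eq (f : ℝ → ℝ) : M * cfc f M = cfc (fun x ↦ x * f x) M := by
    rw [← cfc_mul_cfc, cfc_id' ℝ M hM.isSelfAdjoint]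
  have smul_eq : Real.log c • M = cfc (fun x ↦ Real.log c * x) M :=
    (cfc_const_mul_id (Real.log c) M hM.isSelfAdjoint).symm
  rw [← cfc_comp_smul c Real.log M ((M.finite_real_spectrum.image _).continuousOn _)
    hM.isSelfAdjoint, mul_eq, mul_eq, smul_eq,
    ← cfc_add M _ _ (continuousOn_spectrum _ M) (continuousOn_spectrum _ M)]
  congr 1
  funext x
  rcases eq_or_ne x 0 with rfl | hx
  · simp
  · rw [smul_eq_mul, Real.log_mul hc hx]
    ring

theorem natEntropy_erase (g : X × W ≃ Ω) {ρ : Matrix Ω Ω ℂ} (hρ : ρ.IsHermitian)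
    (htr : ρ.trace = 1) (hM : partialTrace g ρ = M) :
    natEntropy (erase g ρ) = Real.log 2 * vNEntropy M + Real.log (Fintype.card X) := by
  have hMH : M.IsHermitian := hM ▸ isHermitian_partialTrace g hρ
  have hX : (Fintype.card X : ℝ) ≠ 0 := Nat.cast_ne_zero.2 Fintype.card_ne_zero
  set c : ℝ := (Fintype.card X : ℝ)⁻¹ with hc
  have herase : erase g ρ = ampliation g (c • M) := by
    rw [← Complex.coe_smul, map_smul, hc, Complex.ofReal_inv, Complex.ofReal_natCast, ← hM]
    rfl
  have hlog : (erase g ρ * cfc Real.log (erase g ρ)).trace =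
      (M * cfc Real.log (c • M)).trace := by
    have hcfc : cfc Real.log (erase g ρ) = ampliation g (cfc Real.log (c • M)) := by
      rw [herase, ampliation_cfc g (IsSelfAdjoint.smul (.all c) hMH.isSelfAdjoint)]
    have hmem : ampliation g (cfc Real.log (c • M)) ∈ (erase g).range := ⟨_, rfl⟩
    rw [hcfc, trace_mul_comm, CondExp.trace_mul_map hmem, trace_ampliation_mul, hM,
      trace_mul_comm]
  rw [natEntropy, hlog, mul_cfc_log_smul hMH (inv_ne_zero hX), ← natEntropy_eq hMH, natEntropy,
    trace_add, trace_smul, ← hM, trace_partialTrace, htr, Real.log_inv, Complex.real_smul, mul_one,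
    Complex.add_re, Complex.ofReal_re, neg_add_rev, neg_neg]

theorem log_card_prod (X Y : Type*) [Fintype X] [Nonempty X] [Fintype Y] [Nonempty Y] :
    Real.log (Fintype.card (X × Y)) = Real.log (Fintype.card X) + Real.log (Fintype.card Y) := by
  have hX : (Fintype.card X : ℝ) ≠ 0 := Nat.cast_ne_zero.2 Fintype.card_ne_zero
  have hY : (Fintype.card Y : ℝ) ≠ 0 := Nat.cast_ne_zero.2 Fintype.card_ne_zero
  rw [Fintype.card_prod, Nat.cast_mul, Real.log_mul hX hY]

end EntropyOfMarginals

section Quadripartite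

variable {A B C D : Type*}

/-- The factorization of a quadripartite system into `A` and `BCD`. -/
def splitA : A × B × C × D ≃ A × B × C × D :=
  Equiv.refl _

/-- The factorization of a quadripartite system into `B` and `ACD`. -/
def splitB : B × A × C × D ≃ A × B × C × D where
  toFun p := (p.2.1, p.1, p.2.2)
  invFun p := (p.2.1, p.1, p.2.2)

/-- The factorization of a quadripartite system into `C` and `ABD`. -/
def splitC : C × A × B × D ≃ A × B × C × D where
  toFun p := (p.2.1, p.2.2.1, p.1, p.2.2.2)
  invFun p := (p.2.2.1, p.1, p.2.1, p.2.2.2)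

/-- The factorization of a quadripartite system into `D` and `ABC`. -/
def splitD : D × A × B × C ≃ A × B × C × D where
  toFun p := (p.2.1, p.2.2.1, p.2.2.2, p.1)
  invFun p := (p.2.2.2, p.1, p.2.1, p.2.2.1)

/-- The factorization of a quadripartite system into `AB` and `CD`. -/
def splitAB : (A × B) × C × D ≃ A × B × C × D where
  toFun p := (p.1.1, p.1.2, p.2.1, p.2.2)
  invFun p := ((p.1, p.2.1), p.2.2)

/-- The factorization of a quadripartite system into `AC` and `BD`. -/
def splitAC : (A × C) × B × D ≃ A × B × C × D where
  toFun p := (p.1.1, p.2.1, p.1.2, p.2.2)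
  invFun p := ((p.1, p.2.2.1), p.2.1, p.2.2.2)

/-- The factorization of a quadripartite system into `AD` and `BC`. -/
def splitAD : (A × D) × B × C ≃ A × B × C × D where
  toFun p := (p.1.1, p.2.1, p.2.2, p.1.2)
  invFun p := ((p.1, p.2.2.2), p.2.1, p.2.2.1)

/-- The factorization of a quadripartite system into `BC` and `AD`. -/
def splitBC : (B × C) × A × D ≃ A × B × C × D :=
  (Equiv.prodComm _ _).trans splitAD

/-- The factorization of a quadripartite system into `BD` and `AC`. -/
def splitBD : (B × D) × A × C ≃ A × B × C × D :=
  (Equiv.prodComm _ _).trans splitAC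

/-- The factorization of a quadripartite system into `CD` and `AB`. -/
def splitCD : (C × D) × A × B ≃ A × B × C × D :=
  (Equiv.prodComm _ _).trans splitAB

/-- The factorization of a quadripartite system into `BCD` and `A`. -/
def splitBCD : (B × C × D) × A ≃ A × B × C × D :=
  Equiv.prodComm _ _

/-- The factorization of a quadripartite system into `ACD` and `B`. -/
def splitACD : (A × C × D) × B ≃ A × B × C × D :=
  (Equiv.prodComm _ _).trans splitB

/-- The factorization of a quadripartite system into `ABC` and `D`. -/
def splitABC : (A × B × C) × D ≃ A × B × C × D :=
  (Equiv.prodComm _ _).trans splitD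

variable [Fintype A] [DecidableEq A] [Fintype B] [DecidableEq B] [Fintype C] [DecidableEq C]
  [Fintype D] [DecidableEq D] {ρ : Matrix (A × B × C × D) (A × B × C × D) ℂ}

theorem erase_splitA_splitB [Nonempty A] [Nonempty B] :
    erase splitA (erase splitB ρ) = erase splitAB ρ :=
  erase_erase (fun b (c, d) ↦ (b, c, d)) (fun a (c, d) ↦ (a, c, d))
    (fun _ _ _ ↦ rfl) (fun _ _ _ ↦ rfl) ρ

theorem erase_splitA_splitC [Nonempty A] [Nonempty C] :
    erase splitA (erase splitC ρ) = erase splitAC ρ :=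
  erase_erase (fun c (b, d) ↦ (b, c, d)) (fun a (b, d) ↦ (a, b, d))
    (fun _ _ _ ↦ rfl) (fun _ _ _ ↦ rfl) ρ

theorem erase_splitA_splitD [Nonempty A] [Nonempty D] :
    erase splitA (erase splitD ρ) = erase splitAD ρ :=
  erase_erase (fun d (b, c) ↦ (b, c, d)) (fun a (b, c) ↦ (a, b, c))
    (fun _ _ _ ↦ rfl) (fun _ _ _ ↦ rfl) ρ

theorem erase_splitB_splitC [Nonempty B] [Nonempty C] :
    erase splitB (erase splitC ρ) = erase splitBC ρ :=
  erase_erase (fun c (a, d) ↦ (a, c, d)) (fun b (a, d) ↦ (a, b, d))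
    (fun _ _ _ ↦ rfl) (fun _ _ _ ↦ rfl) ρ

theorem erase_splitB_splitD [Nonempty B] [Nonempty D] :
    erase splitB (erase splitD ρ) = erase splitBD ρ :=
  erase_erase (fun d (a, c) ↦ (a, c, d)) (fun b (a, c) ↦ (a, b, c))
    (fun _ _ _ ↦ rfl) (fun _ _ _ ↦ rfl) ρ

theorem erase_splitC_splitD [Nonempty C] [Nonempty D] :
    erase splitC (erase splitD ρ) = erase splitCD ρ :=
  erase_erase (fun d (a, b) ↦ (a, b, d)) (fun c (a, b) ↦ (a, b, c))
    (fun _ _ _ ↦ rfl) (fun _ _ _ ↦ rfl) ρ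

theorem erase_splitA_splitBC [Nonempty A] [Nonempty B] [Nonempty C] :
    erase splitA (erase splitBC ρ) = erase splitABC ρ :=
  erase_erase (fun (b, c) d ↦ (b, c, d)) (fun a d ↦ (a, d))
    (fun _ _ _ ↦ rfl) (fun _ _ _ ↦ rfl) ρ

theorem erase_splitA_splitCD [Nonempty A] [Nonempty C] [Nonempty D] :
    erase splitA (erase splitCD ρ) = erase splitACD ρ :=
  erase_erase (fun (c, d) b ↦ (b, c, d)) (fun a b ↦ (a, b))
    (fun _ _ _ ↦ rfl) (fun _ _ _ ↦ rfl) ρ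

theorem erase_splitB_splitCD [Nonempty B] [Nonempty C] [Nonempty D] :
    erase splitB (erase splitCD ρ) = erase splitBCD ρ :=
  erase_erase (fun (c, d) a ↦ (a, c, d)) (fun b a ↦ (a, b))
    (fun _ _ _ ↦ rfl) (fun _ _ _ ↦ rfl) ρ

/-- The conditional expectations erasing the tensor factors of a quadripartite system. -/
noncomputable def quadParties (A B C D : Type*) [Fintype A] [DecidableEq A] [Nonempty A]
    [Fintype B] [DecidableEq B] [Nonempty B] [Fintype C] [DecidableEq C] [Nonempty C]
    [Fintype D] [DecidableEq D] [Nonempty D] : Parties (A × B × C × D) where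
  a := erase splitA
  b := erase splitB
  c := erase splitC
  d := erase splitD
  ab := erase_comm (k := splitAB) (fun b (c, d) ↦ (b, c, d)) (fun a (c, d) ↦ (a, c, d))
    (fun _ _ _ ↦ rfl) (fun _ _ _ ↦ rfl)
  ac := erase_comm (k := splitAC) (fun c (b, d) ↦ (b, c, d)) (fun a (b, d) ↦ (a, b, d))
    (fun _ _ _ ↦ rfl) (fun _ _ _ ↦ rfl)
  ad := erase_comm (k := splitAD) (fun d (b, c) ↦ (b, c, d)) (fun a (b, c) ↦ (a, b, c))
    (fun _ _ _ ↦ rfl) (fun _ _ _ ↦ rfl)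
  bc := erase_comm (k := splitBC) (fun c (a, d) ↦ (a, c, d)) (fun b (a, d) ↦ (a, b, d))
    (fun _ _ _ ↦ rfl) (fun _ _ _ ↦ rfl)
  bd := erase_comm (k := splitBD) (fun d (a, c) ↦ (a, c, d)) (fun b (a, c) ↦ (a, b, c))
    (fun _ _ _ ↦ rfl) (fun _ _ _ ↦ rfl)
  cd := erase_comm (k := splitCD) (fun d (a, b) ↦ (a, b, d)) (fun c (a, b) ↦ (a, b, c))
    (fun _ _ _ ↦ rfl) (fun _ _ _ ↦ rfl)
  commute x hxb hxc y hya hyd := by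
    rw [← CondExp.map_of_mem hxb, ← CondExp.map_of_mem hxc, ← CondExp.map_of_mem hya,
      ← CondExp.map_of_mem hyd, erase_splitB_splitC, erase_splitA_splitD]
    obtain ⟨M, hM⟩ := (erase splitBC).map_mem x
    obtain ⟨N, hN⟩ := (erase splitAD).map_mem y
    rw [← hM, ← hN]
    exact (commute_ampliation splitAD N M).symm
  map_mul_comm x hxa hxd y hy := by
    have hx : x ∈ (erase splitAD).range := by
      rw [← CondExp.map_of_mem hxa, ← CondExp.map_of_mem hxd, erase_splitA_splitD]
      exact CondExp.map_mem _ _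
    exact erase_mul_comm (fun (a, d) c ↦ (a, c, d)) (fun (a, d) b ↦ (a, b, d))
      (fun _ _ _ ↦ rfl) (fun _ _ _ ↦ rfl) hx hy

section Entropies

theorem natEntropy_erase_splitC [Nonempty C] (hρ : ρ.IsHermitian) (htr : ρ.trace = 1) :
    natEntropy (erase splitC ρ) = Real.log 2 * SABD ρ + Real.log (Fintype.card C) :=
  natEntropy_erase splitC hρ htr rfl

theorem natEntropy_erase_splitD [Nonempty D] (hρ : ρ.IsHermitian) (htr : ρ.trace = 1) :
    natEntropy (erase splitD ρ) = Real.log 2 * SABC ρ + Real.log (Fintype.card D) :=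
  natEntropy_erase splitD hρ htr rfl

theorem natEntropy_erase_splitAB [Nonempty A] [Nonempty B] (hρ : ρ.IsHermitian)
    (htr : ρ.trace = 1) :
    natEntropy (erase splitAB ρ) = Real.log 2 * SCD ρ + Real.log (Fintype.card (A × B)) :=
  natEntropy_erase splitAB hρ htr (ext fun _ _ ↦ Fintype.sum_prod_type _)

theorem natEntropy_erase_splitAC [Nonempty A] [Nonempty C] (hρ : ρ.IsHermitian)
    (htr : ρ.trace = 1) :
    natEntropy (erase splitAC ρ) = Real.log 2 * SBD ρ + Real.log (Fintype.card (A × C)) :=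
  natEntropy_erase splitAC hρ htr (ext fun _ _ ↦ Fintype.sum_prod_type _)

theorem natEntropy_erase_splitAD [Nonempty A] [Nonempty D] (hρ : ρ.IsHermitian)
    (htr : ρ.trace = 1) :
    natEntropy (erase splitAD ρ) = Real.log 2 * SBC ρ + Real.log (Fintype.card (A × D)) :=
  natEntropy_erase splitAD hρ htr (ext fun _ _ ↦ Fintype.sum_prod_type _)

theorem natEntropy_erase_splitBC [Nonempty B] [Nonempty C] (hρ : ρ.IsHermitian)
    (htr : ρ.trace = 1) :
    natEntropy (erase splitBC ρ) = Real.log 2 * SAD ρ + Real.log (Fintype.card (B × C)) :=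
  natEntropy_erase splitBC hρ htr (ext fun _ _ ↦ Fintype.sum_prod_type _)

theorem natEntropy_erase_splitBD [Nonempty B] [Nonempty D] (hρ : ρ.IsHermitian)
    (htr : ρ.trace = 1) :
    natEntropy (erase splitBD ρ) = Real.log 2 * SAC ρ + Real.log (Fintype.card (B × D)) :=
  natEntropy_erase splitBD hρ htr (ext fun _ _ ↦ Fintype.sum_prod_type _)

theorem natEntropy_erase_splitCD [Nonempty C] [Nonempty D] (hρ : ρ.IsHermitian)
    (htr : ρ.trace = 1) :
    natEntropy (erase splitCD ρ) = Real.log 2 * SAB ρ + Real.log (Fintype.card (C × D)) :=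
  natEntropy_erase splitCD hρ htr (ext fun _ _ ↦ Fintype.sum_prod_type _)

theorem natEntropy_erase_splitABC [Nonempty A] [Nonempty B] [Nonempty C] (hρ : ρ.IsHermitian)
    (htr : ρ.trace = 1) :
    natEntropy (erase splitABC ρ) = Real.log 2 * SD ρ + Real.log (Fintype.card (A × B × C)) :=
  natEntropy_erase splitABC hρ htr (ext fun _ _ ↦ (Fintype.sum_prod_type _).trans
    (Finset.sum_congr rfl fun _ _ ↦ Fintype.sum_prod_type _))

theorem natEntropy_erase_splitACD [Nonempty A] [Nonempty C] [Nonempty D] (hρ : ρ.IsHermitian)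
    (htr : ρ.trace = 1) :
    natEntropy (erase splitACD ρ) = Real.log 2 * SB ρ + Real.log (Fintype.card (A × C × D)) :=
  natEntropy_erase splitACD hρ htr (ext fun _ _ ↦ (Fintype.sum_prod_type _).trans
    (Finset.sum_congr rfl fun _ _ ↦ Fintype.sum_prod_type _))

theorem natEntropy_erase_splitBCD [Nonempty B] [Nonempty C] [Nonempty D] (hρ : ρ.IsHermitian)
    (htr : ρ.trace = 1) :
    natEntropy (erase splitBCD ρ) = Real.log 2 * SA ρ + Real.log (Fintype.card (B × C × D)) :=
  natEntropy_erase splitBCD hρ htr (ext fun _ _ ↦ (Fintype.sum_prod_type _).trans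
    (Finset.sum_congr rfl fun _ _ ↦ Fintype.sum_prod_type _))

variable [Nonempty A] [Nonempty B] [Nonempty C] [Nonempty D]

theorem saturatesMonotonicity_splitA_splitC_splitD (hρ : ρ.IsHermitian) (htr : ρ.trace = 1)
    (h : SAB ρ + SBC ρ - SABC ρ - SB ρ = 0) :
    SaturatesMonotonicity (erase splitA) (erase splitD ρ) (erase splitC (erase splitD ρ)) := by
  rw [saturatesMonotonicity_map_iff (E := erase splitA) (F := erase splitC)
    (quadParties A B C D).ac, erase_splitC_splitD,
    erase_splitA_splitD, erase_splitA_splitCD]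
  rw [natEntropy_erase_splitCD hρ htr, natEntropy_erase_splitAD hρ htr,
    natEntropy_erase_splitD hρ htr, natEntropy_erase_splitACD hρ htr]
  simp only [log_card_prod]
  linear_combination Real.log 2 * h

theorem saturatesMonotonicity_splitB_splitC_splitD (hρ : ρ.IsHermitian) (htr : ρ.trace = 1)
    (h : SAC ρ + SAB ρ - SABC ρ - SA ρ = 0) :
    SaturatesMonotonicity (erase splitB) (erase splitD ρ) (erase splitC (erase splitD ρ)) := by
  rw [saturatesMonotonicity_map_iff (E := erase splitB) (F := erase splitC)
    (quadParties A B C D).bc, erase_splitC_splitD,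
    erase_splitB_splitD, erase_splitB_splitCD]
  rw [natEntropy_erase_splitCD hρ htr, natEntropy_erase_splitBD hρ htr,
    natEntropy_erase_splitD hρ htr, natEntropy_erase_splitBCD hρ htr]
  simp only [log_card_prod]
  linear_combination Real.log 2 * h

theorem saturatesMonotonicity_splitA_splitB_splitC (hρ : ρ.IsHermitian) (htr : ρ.trace = 1)
    (h : SAD ρ + SBD ρ - SABD ρ - SD ρ = 0) :
    SaturatesMonotonicity (erase splitA) (erase splitC ρ) (erase splitB (erase splitC ρ)) := by
  rw [saturatesMonotonicity_map_iff (E := erase splitA) (F := erase splitB)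
    (quadParties A B C D).ab, erase_splitB_splitC,
    erase_splitA_splitC, erase_splitA_splitBC]
  rw [natEntropy_erase_splitBC hρ htr, natEntropy_erase_splitAC hρ htr,
    natEntropy_erase_splitC hρ htr, natEntropy_erase_splitABC hρ htr]
  simp only [log_card_prod]
  linear_combination Real.log 2 * h

theorem SAB_sub_SABC_le_of_natEntropy_erase (hρ : ρ.IsHermitian) (htr : ρ.trace = 1)
    (h : natEntropy (erase splitC (erase splitD ρ)) - natEntropy (erase splitD ρ) ≤
      natEntropy (erase splitA (erase splitB (erase splitC ρ))) -
        natEntropy (erase splitA (erase splitB ρ))) :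
    SAB ρ - SABC ρ ≤ SD ρ - SCD ρ := by
  rw [erase_splitC_splitD, erase_splitB_splitC, erase_splitA_splitBC, erase_splitA_splitB,
    natEntropy_erase_splitCD hρ htr, natEntropy_erase_splitD hρ htr,
    natEntropy_erase_splitABC hρ htr, natEntropy_erase_splitAB hρ htr] at h
  simp only [log_card_prod] at h
  refine le_of_mul_le_mul_left ?_ (Real.log_pos one_lt_two)
  linarith

end Entropies

end Quadripartite

end LindenWinter

open LindenWinter

/-- **Theorem 1 (Linden–Winter).** If a quadripartite state saturates strong
subadditivity for the triples `ABC`, `CAB` and `ADB` (pivot in the middle), i.e.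
`I(A;C|B) = 0`, `I(C;B|A) = 0` and `I(A;B|D) = 0`, then `I(C;D) ≥ I(C;AB)`. -/
theorem constrained_inequality
    {A B C D : Type*} [Fintype A] [DecidableEq A] [Fintype B] [DecidableEq B]
    [Fintype C] [DecidableEq C] [Fintype D] [DecidableEq D]
    (ρ : Matrix (A × B × C × D) (A × B × C × D) ℂ) (hρ : IsState ρ)
    (hACB : SAB ρ + SBC ρ - SABC ρ - SB ρ = 0)
    (hCBA : SAC ρ + SAB ρ - SABC ρ - SA ρ = 0)
    (hABD : SAD ρ + SBD ρ - SABD ρ - SD ρ = 0) :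
    SC ρ + SAB ρ - SABC ρ ≤ SC ρ + SD ρ - SCD ρ := by
  obtain ⟨_, _, _, _⟩ : Nonempty A ∧ Nonempty B ∧ Nonempty C ∧ Nonempty D := by
    simpa only [nonempty_prod] using nonempty_of_trace_eq_one hρ.2
  have hH := hρ.1.isHermitian
  have hle := SAB_sub_SABC_le_of_natEntropy_erase hH hρ.2 <|
    (quadParties A B C D).natEntropy_sub_le_of_saturatesMonotonicity hρ.1
      (saturatesMonotonicity_splitA_splitC_splitD hH hρ.2 hACB)
      (saturatesMonotonicity_splitB_splitC_splitD hH hρ.2 hCBA)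
      (saturatesMonotonicity_splitA_splitB_splitC hH hρ.2 hABD)
  linarith
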